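/- arXiv:2403.13584 — 5 statements merged into one kernel-verified Lean document; each statement's English description precedes it below -/
import Mathlib

section
/- Let ρ and σ be density operators on a finite-dimensional complex Hilbert space with supp(ρ) ⊆ supp(σ). Then for every test 0 ≤ T ≤ 𝟙 with Tr[ρT] > 0 and every α > 1, one has Tr[ρT] ≤ exp( −((α−1)/α) ( −log Tr[σT] − D_α^*(ρ‖σ) ) ), and consequently Tr[ρT] ≤ exp( −sup_{α>1} ((α−1)/α)( −log Tr[σT] − D_α^*(ρ‖σ) ) ). -/
open Matrix
open scoped ComplexOrder Kronecker

noncomputable section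

/-- Real power of a Hermitian matrix via functional calculus on its support
(Moore–Penrose convention); junk value `0` for non-Hermitian input. -/
def Matrix.rpowH {ι : Type*} [Fintype ι] [DecidableEq ι] (A : Matrix ι ι ℂ) (p : ℝ) :
    Matrix ι ι ℂ :=
  if hA : A.IsHermitian then
    (hA.eigenvectorUnitary : Matrix ι ι ℂ) *
      Matrix.diagonal (fun i => ((hA.eigenvalues i ^ p : ℝ) : ℂ)) *
      star (hA.eigenvectorUnitary : Matrix ι ι ℂ)
  else 0

/-- Real part of the trace. -/
def retr {ι : Type*} [Fintype ι] (A : Matrix ι ι ℂ) : ℝ :=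
  (Matrix.trace A).re

/-- Sandwiched Rényi divergence
`D_α^*(ρ‖σ) = (α-1)⁻¹ log Tr[(σ^{(1-α)/(2α)} ρ σ^{(1-α)/(2α)})^α]`. -/
def sandwichedRenyiDiv {ι : Type*} [Fintype ι] [DecidableEq ι]
    (α : ℝ) (ρ σ : Matrix ι ι ℂ) : ℝ :=
  (α - 1)⁻¹ * Real.log (retr (Matrix.rpowH
    (Matrix.rpowH σ ((1 - α) / (2 * α)) * ρ * Matrix.rpowH σ ((1 - α) / (2 * α))) α))

section helpers

variable {ι : Type*} [Fintype ι] [DecidableEq ι]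

lemma ssc_spec {A : Matrix ι ι ℂ} (hA : A.IsHermitian) :
    A = (hA.eigenvectorUnitary : Matrix ι ι ℂ) *
      Matrix.diagonal (fun i => ((hA.eigenvalues i : ℝ) : ℂ)) *
      (hA.eigenvectorUnitary : Matrix ι ι ℂ)ᴴ := by
  have h := hA.spectral_theorem
  rw [Unitary.conjStarAlgAut_apply] at h
  exact h

lemma ssc_UhU {A : Matrix ι ι ℂ} (hA : A.IsHermitian) :
    (hA.eigenvectorUnitary : Matrix ι ι ℂ)ᴴ * (hA.eigenvectorUnitary : Matrix ι ι ℂ) = 1 :=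
  Unitary.coe_star_mul_self hA.eigenvectorUnitary

lemma ssc_UUh {A : Matrix ι ι ℂ} (hA : A.IsHermitian) :
    (hA.eigenvectorUnitary : Matrix ι ι ℂ) * (hA.eigenvectorUnitary : Matrix ι ι ℂ)ᴴ = 1 :=
  Unitary.coe_mul_star_self hA.eigenvectorUnitary

lemma ssc_rpowH {A : Matrix ι ι ℂ} (hA : A.IsHermitian) (p : ℝ) :
    A.rpowH p = (hA.eigenvectorUnitary : Matrix ι ι ℂ) *
      Matrix.diagonal (fun i => ((hA.eigenvalues i ^ p : ℝ) : ℂ)) *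
      (hA.eigenvectorUnitary : Matrix ι ι ℂ)ᴴ := by
  rw [Matrix.rpowH, dif_pos hA]; rfl

lemma ssc_rpowH_one {A : Matrix ι ι ℂ} (hA : A.IsHermitian) : A.rpowH 1 = A := by
  rw [ssc_rpowH hA]
  simp only [Real.rpow_one]
  exact (ssc_spec hA).symm

lemma ssc_conj_mul {U : Matrix ι ι ℂ} (hU : Uᴴ * U = 1) (a b : ι → ℂ) :
    (U * Matrix.diagonal a * Uᴴ) * (U * Matrix.diagonal b * Uᴴ) =
      U * Matrix.diagonal (fun i => a i * b i) * Uᴴ := by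
  calc _ = U * Matrix.diagonal a * (Uᴴ * U) * Matrix.diagonal b * Uᴴ := by
        simp only [Matrix.mul_assoc]
    _ = _ := by rw [hU, Matrix.mul_one, Matrix.mul_assoc U, Matrix.diagonal_mul_diagonal]

lemma ssc_rpowH_mul {A : Matrix ι ι ℂ} (hA : A.PosSemidef) {p q : ℝ} (h : p + q ≠ 0) :
    A.rpowH p * A.rpowH q = A.rpowH (p + q) := by
  rw [ssc_rpowH hA.1, ssc_rpowH hA.1, ssc_rpowH hA.1, ssc_conj_mul (ssc_UhU hA.1)]
  congr 2
  congr 1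
  ext i
  rw [Real.rpow_add' (hA.eigenvalues_nonneg i) h]
  push_cast
  rfl

lemma ssc_rpowH_herm {A : Matrix ι ι ℂ} (hA : A.IsHermitian) (p : ℝ) :
    (A.rpowH p)ᴴ = A.rpowH p := by
  rw [ssc_rpowH hA]
  simp only [Matrix.conjTranspose_mul, Matrix.conjTranspose_conjTranspose,
    Matrix.diagonal_conjTranspose, Matrix.mul_assoc]
  congr 3
  ext i
  simp

lemma ssc_retr_conj {U : Matrix ι ι ℂ} (hU : U * Uᴴ = 1) (A : Matrix ι ι ℂ) :
    retr (Uᴴ * A * U) = retr A := by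
  rw [retr, Matrix.trace_mul_comm, ← Matrix.mul_assoc, hU, Matrix.one_mul, retr]

lemma ssc_retr_rpowH {A : Matrix ι ι ℂ} (hA : A.IsHermitian) (p : ℝ) :
    retr (A.rpowH p) = ∑ i, hA.eigenvalues i ^ p := by
  rw [ssc_rpowH hA, retr, Matrix.trace_mul_comm, ← Matrix.mul_assoc, ssc_UhU, Matrix.one_mul,
    Matrix.trace_diagonal]
  simp

lemma ssc_diag (M : Matrix ι ι ℂ) (d : ι → ℝ) (j : ι) :
    (Mᴴ * Matrix.diagonal (fun i => ((d i : ℝ) : ℂ)) * M) j j =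
      ((∑ k, Complex.normSq (M k j) * d k : ℝ) : ℂ) := by
  rw [Matrix.mul_apply]
  push_cast
  refine Finset.sum_congr rfl fun k _ => ?_
  rw [Matrix.mul_diagonal, Matrix.conjTranspose_apply, Complex.normSq_eq_conj_mul_self]
  simp only [RCLike.star_def]
  ring

lemma ssc_eig {A : Matrix ι ι ℂ} (hA : A.IsHermitian) :
    (hA.eigenvectorUnitary : Matrix ι ι ℂ)ᴴ * A * (hA.eigenvectorUnitary : Matrix ι ι ℂ) =
      Matrix.diagonal (fun i => ((hA.eigenvalues i : ℝ) : ℂ)) := by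
  have h := ssc_spec hA
  set U := (hA.eigenvectorUnitary : Matrix ι ι ℂ) with hUdef
  set D := Matrix.diagonal (fun i => ((hA.eigenvalues i : ℝ) : ℂ)) with hD
  have hU : Uᴴ * U = 1 := ssc_UhU hA
  calc Uᴴ * A * U = Uᴴ * (U * D * Uᴴ) * U := by rw [← h]
    _ = (Uᴴ * U) * D * (Uᴴ * U) := by simp only [Matrix.mul_assoc]
    _ = D := by rw [hU, Matrix.one_mul, Matrix.mul_one]

/-- Subnormalised Jensen inequality. -/
lemma ssc_jensen {β : ℝ} (hβ : 1 ≤ β) (w f : ι → ℝ) (hw : ∀ i, 0 ≤ w i) (hw1 : ∑ i, w i ≤ 1)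
    (hf : ∀ i, 0 ≤ f i) : (∑ i, w i * f i) ^ β ≤ ∑ i, w i * f i ^ β := by
  have h := Real.inner_le_weight_mul_Lp_of_nonneg Finset.univ hβ w f hw hf
  have h0 : 0 ≤ ∑ i, w i * f i := Finset.sum_nonneg fun i _ => mul_nonneg (hw i) (hf i)
  have h1 : 0 ≤ ∑ i, w i * f i ^ β :=
    Finset.sum_nonneg fun i _ => mul_nonneg (hw i) (Real.rpow_nonneg (hf i) _)
  have hw0 : 0 ≤ ∑ i, w i := Finset.sum_nonneg fun i _ => hw i
  have hβ0 : 0 < β := by linarith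
  have h2 : (∑ i, w i) ^ (1 - β⁻¹) ≤ 1 :=
    Real.rpow_le_one hw0 hw1 (by have := inv_le_one_of_one_le₀ hβ; linarith)
  have h3 : ∑ i, w i * f i ≤ (∑ i, w i * f i ^ β) ^ β⁻¹ :=
    h.trans (mul_le_of_le_one_left (Real.rpow_nonneg h1 _) h2)
  calc _ ≤ ((∑ i, w i * f i ^ β) ^ β⁻¹) ^ β := Real.rpow_le_rpow h0 h3 hβ0.le
    _ = _ := Real.rpow_inv_rpow h1 hβ0.ne'

/-- Hölder inequality for the trace of a product of positive matrices. -/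
lemma ssc_holder {X Y : Matrix ι ι ℂ} (hX : X.PosSemidef) (hY : Y.PosSemidef) {α β : ℝ}
    (hαβ : α.HolderConjugate β) :
    retr (X * Y) ≤ (∑ i, hX.1.eigenvalues i ^ α) ^ (1 / α) *
      (∑ i, hY.1.eigenvalues i ^ β) ^ (1 / β) := by
  set U := (hX.1.eigenvectorUnitary : Matrix ι ι ℂ) with hUdef
  set V := (hY.1.eigenvectorUnitary : Matrix ι ι ℂ) with hVdef
  have hUU : Uᴴ * U = 1 := ssc_UhU hX.1
  have hUU' : U * Uᴴ = 1 := ssc_UUh hX.1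
  have hVV : Vᴴ * V = 1 := ssc_UhU hY.1
  have hVV' : V * Vᴴ = 1 := ssc_UUh hY.1
  set M := Vᴴ * U with hM
  have hMM : Mᴴ * M = 1 := by
    calc Mᴴ * M = Uᴴ * (V * Vᴴ) * U := by
          simp only [hM, Matrix.conjTranspose_mul, Matrix.conjTranspose_conjTranspose,
            Matrix.mul_assoc]
      _ = 1 := by rw [hVV', Matrix.mul_one, hUU]
  have hMM' : M * Mᴴ = 1 := mul_eq_one_comm.mp hMM
  have hcol : ∀ j, ∑ k, Complex.normSq (M k j) = 1 := by
    intro j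
    have h := ssc_diag M (fun _ => 1) j
    simp only [Complex.ofReal_one, Matrix.diagonal_one, Matrix.mul_one, hMM, mul_one,
      Matrix.one_apply_eq] at h
    exact_mod_cast h.symm
  have hrow : ∀ k, ∑ j, Complex.normSq (M k j) = 1 := by
    intro k
    have h := ssc_diag Mᴴ (fun _ => 1) k
    simp only [Complex.ofReal_one, Matrix.diagonal_one, Matrix.mul_one,
      Matrix.conjTranspose_conjTranspose, hMM', mul_one, Matrix.one_apply_eq,
      Matrix.conjTranspose_apply, RCLike.star_def, Complex.normSq_conj] at h
    exact_mod_cast h.symm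
  set x := hX.1.eigenvalues with hx
  set y := hY.1.eigenvalues with hy
  have hx0 : ∀ i, 0 ≤ x i := hX.eigenvalues_nonneg
  have hy0 : ∀ i, 0 ≤ y i := hY.eigenvalues_nonneg
  set d : ι → ℝ := fun i => ∑ k, Complex.normSq (M k i) * y k with hd
  have hd0 : ∀ i, 0 ≤ d i := fun i =>
    Finset.sum_nonneg fun k _ => mul_nonneg (Complex.normSq_nonneg _) (hy0 k)
  have htr : retr (X * Y) = ∑ i, x i * d i := by
    have e1 : Uᴴ * (X * Y) * U =
        Matrix.diagonal (fun i => ((x i : ℝ) : ℂ)) *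
          (Mᴴ * Matrix.diagonal (fun i => ((y i : ℝ) : ℂ)) * M) := by
      calc Uᴴ * (X * Y) * U = (Uᴴ * X * (U * Uᴴ)) * Y * U := by
            rw [hUU']; simp only [Matrix.mul_assoc, Matrix.mul_one]
        _ = (Uᴴ * X * U) * (Uᴴ * Y * U) := by simp only [Matrix.mul_assoc]
        _ = (Uᴴ * X * U) * (Mᴴ * (Vᴴ * Y * V) * M) := by
            congr 1
            symm
            calc Mᴴ * (Vᴴ * Y * V) * M = Uᴴ * (V * Vᴴ) * Y * (V * Vᴴ) * U := by
                  simp only [hM, Matrix.conjTranspose_mul, Matrix.conjTranspose_conjTranspose,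
                    Matrix.mul_assoc]
              _ = _ := by rw [hVV', Matrix.mul_one, Matrix.mul_one]
        _ = _ := by rw [ssc_eig hX.1, ssc_eig hY.1]
    rw [← ssc_retr_conj hUU', e1, retr, Matrix.trace, Complex.re_sum]
    refine Finset.sum_congr rfl fun i _ => ?_
    rw [Matrix.diag_apply, Matrix.diagonal_mul, ssc_diag, ← Complex.ofReal_mul, Complex.ofReal_re]
  rw [htr]
  refine (Real.inner_le_Lp_mul_Lq_of_nonneg Finset.univ hαβ (fun i _ => hx0 i)
    (fun i _ => hd0 i)).trans ?_
  have hβ1 : 1 ≤ β := hαβ.symm.lt.le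
  refine mul_le_mul_of_nonneg_left (Real.rpow_le_rpow
    (Finset.sum_nonneg fun i _ => Real.rpow_nonneg (hd0 i) _) ?_ (by positivity))
    (Real.rpow_nonneg (Finset.sum_nonneg fun i _ => Real.rpow_nonneg (hx0 i) _) _)
  calc ∑ i, d i ^ β ≤ ∑ i, ∑ k, Complex.normSq (M k i) * y k ^ β :=
        Finset.sum_le_sum fun i _ => ssc_jensen hβ1 _ _ (fun _ => Complex.normSq_nonneg _)
          (hcol i).le hy0
    _ = ∑ k, y k ^ β := by
        rw [Finset.sum_comm]
        refine Finset.sum_congr rfl fun k _ => ?_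
        rw [← Finset.sum_mul, hrow, one_mul]

/-- The eigenvalues of `A * B` and `B * A` agree. -/
lemma ssc_comm {A B : Matrix ι ι ℂ} (h1 : (A * B).IsHermitian) (h2 : (B * A).IsHermitian)
    (p : ℝ) : ∑ i, h1.eigenvalues i ^ p = ∑ i, h2.eigenvalues i ^ p := by
  have h : (A * B).charpoly.roots = (B * A).charpoly.roots := by rw [Matrix.charpoly_mul_comm]
  rw [h1.roots_charpoly_eq_eigenvalues, h2.roots_charpoly_eq_eigenvalues] at h
  have h' := congrArg (fun m => (Multiset.map (fun z : ℂ => z.re ^ p) m).sum) h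
  simpa [Multiset.map_map, Function.comp_def] using h'

lemma ssc_test {σ T K : Matrix ι ι ℂ} (hσ : σ.PosSemidef) (hT1 : (1 - T).PosSemidef)
    (hK : Kᴴ = K) (hKT : K * K = T) {β : ℝ} (hβ : 1 ≤ β)
    {Y : Matrix ι ι ℂ} (hYe : Y = K * σ.rpowH (1 / β) * K) (hY : Y.IsHermitian) :
    ∑ i, hY.eigenvalues i ^ β ≤ retr (σ * T) := by
  set U := (hσ.1.eigenvectorUnitary : Matrix ι ι ℂ) with hUdef
  set V := (hY.eigenvectorUnitary : Matrix ι ι ℂ) with hVdef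
  have hUU' : U * Uᴴ = 1 := ssc_UUh hσ.1
  have hVV : Vᴴ * V = 1 := ssc_UhU hY
  have hVV' : V * Vᴴ = 1 := ssc_UUh hY
  have hs0 := hσ.eigenvalues_nonneg
  set s := hσ.1.eigenvalues with hs
  set M := Uᴴ * K * V with hM
  have hMH : Mᴴ = Vᴴ * K * U := by
    simp only [hM, Matrix.conjTranspose_mul, Matrix.conjTranspose_conjTranspose, hK,
      Matrix.mul_assoc]
  have hβ0 : 0 < β := by linarith
  have hcol : ∀ j, ∑ k, Complex.normSq (M k j) ≤ 1 := by
    intro j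
    have h := ssc_diag M (fun _ => 1) j
    have e : Mᴴ * M = Vᴴ * T * V := by
      calc Mᴴ * M = Vᴴ * K * (U * Uᴴ) * K * V := by
            rw [hMH, hM]; simp only [Matrix.mul_assoc]
        _ = Vᴴ * T * V := by rw [hUU', ← hKT]; simp only [Matrix.mul_assoc, Matrix.one_mul]
    have h1 := (hT1.conjTranspose_mul_mul_same V).diag_nonneg (i := j)
    rw [Matrix.mul_sub, Matrix.sub_mul, Matrix.mul_one, hVV, ← e, Matrix.sub_apply,
      Matrix.one_apply_eq] at h1
    simp only [Complex.ofReal_one, Matrix.diagonal_one, Matrix.mul_one, mul_one] at h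
    rw [h, sub_nonneg] at h1
    exact_mod_cast h1
  have hy : ∀ j, hY.eigenvalues j = ∑ k, Complex.normSq (M k j) * s k ^ (1 / β) := by
    intro j
    have h := congrFun (congrFun (ssc_eig hY) j) j
    rw [Matrix.diagonal_apply_eq] at h
    have h2 := ssc_diag M (fun k => s k ^ (1 / β)) j
    have h3 : ((hY.eigenvalues j : ℝ) : ℂ) =
        ((∑ k, Complex.normSq (M k j) * s k ^ (1 / β) : ℝ) : ℂ) := by
      have e : Vᴴ * Y * V =
          Mᴴ * Matrix.diagonal (fun k => ((s k ^ (1 / β) : ℝ) : ℂ)) * M := by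
        rw [hMH, hM, hYe, ssc_rpowH hσ.1]
        simp only [Matrix.mul_assoc]
        rfl
      rw [← h2, ← h, ← e]
    exact_mod_cast h3
  have htr : retr (σ * T) = ∑ j, ∑ k, Complex.normSq (M k j) * s k := by
    have e1 : Vᴴ * (K * σ * K) * V = Mᴴ * Matrix.diagonal (fun k => ((s k : ℝ) : ℂ)) * M := by
      rw [hMH, hM]
      conv_lhs => rw [ssc_spec hσ.1]
      simp only [Matrix.mul_assoc]
      rfl
    have e2 : retr (σ * T) = retr (K * σ * K) := by
      rw [retr, retr, ← hKT, Matrix.trace_mul_comm (K * σ) K, Matrix.trace_mul_comm σ,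
        Matrix.mul_assoc]
    rw [e2, ← ssc_retr_conj hVV', e1, retr, Matrix.trace, Complex.re_sum]
    refine Finset.sum_congr rfl fun i _ => ?_
    rw [Matrix.diag_apply, ssc_diag, Complex.ofReal_re]
  rw [htr]
  refine Finset.sum_le_sum fun j _ => ?_
  rw [hy]
  refine (ssc_jensen hβ _ _ (fun _ => Complex.normSq_nonneg _) (hcol j)
    (fun k => Real.rpow_nonneg (hs0 k) _)).trans (le_of_eq ?_)
  refine Finset.sum_congr rfl fun k _ => ?_
  rw [one_div, Real.rpow_inv_rpow (hs0 k) hβ0.ne']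

/-- The support projection of `σ` fixes `ρ`. -/
lemma ssc_supp {ρ σ : Matrix ι ι ℂ} (hσ : σ.PosSemidef)
    (hsupp : ∀ v : ι → ℂ, σ.mulVec v = 0 → ρ.mulVec v = 0) {p : ℝ} (hp : p ≠ 0) :
    ρ * (σ.rpowH p * σ.rpowH (-p)) = ρ := by
  have hs0 := hσ.eigenvalues_nonneg
  have h1 : σ * (1 - σ.rpowH p * σ.rpowH (-p)) = 0 := by
    rw [Matrix.mul_sub, Matrix.mul_one, sub_eq_zero]
    have hsp := ssc_spec hσ.1
    rw [ssc_rpowH hσ.1, ssc_rpowH hσ.1, ssc_conj_mul (ssc_UhU hσ.1)]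
    refine hsp.trans (Eq.trans ?_ (congrArg (fun z => z * _) hsp.symm))
    rw [ssc_conj_mul (ssc_UhU hσ.1)]
    congr 3
    ext i
    rw [← Complex.ofReal_mul, ← Complex.ofReal_mul]
    congr 1
    rcases (hs0 i).eq_or_lt with h | h
    · rw [← h]; simp
    · rw [← Real.rpow_add h]; simp
  have h2 : ρ * (1 - σ.rpowH p * σ.rpowH (-p)) = 0 := by
    ext i j
    have h3 : σ.mulVec ((1 - σ.rpowH p * σ.rpowH (-p)).col j) = 0 := by
      ext k
      exact congrFun (congrFun h1 k) j
    exact congrFun (hsupp _ h3) i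
  rw [Matrix.mul_sub, Matrix.mul_one, sub_eq_zero] at h2
  exact h2.symm

lemma ssc_main (ρ σ : Matrix ι ι ℂ) (hρ : ρ.PosSemidef) (hσ : σ.PosSemidef)
    (hsupp : ∀ v : ι → ℂ, σ.mulVec v = 0 → ρ.mulVec v = 0)
    (T : Matrix ι ι ℂ) (hT : T.PosSemidef) (hT1 : (1 - T).PosSemidef) (α : ℝ) (hα : 1 < α) :
    0 ≤ retr (σ * T) ∧ 0 ≤ retr (Matrix.rpowH
      (Matrix.rpowH σ ((1 - α) / (2 * α)) * ρ * Matrix.rpowH σ ((1 - α) / (2 * α))) α) ∧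
    retr (ρ * T) ≤ (retr (Matrix.rpowH
      (Matrix.rpowH σ ((1 - α) / (2 * α)) * ρ * Matrix.rpowH σ ((1 - α) / (2 * α))) α)) ^ (1 / α) *
      (retr (σ * T)) ^ ((α - 1) / α) := by
  have hα0 : 0 < α := by linarith
  have hα1 : 0 < α - 1 := by linarith
  set γ := (1 - α) / (2 * α) with hγ
  have hγ0 : γ ≠ 0 := by
    rw [hγ]; exact div_ne_zero (by linarith) (by linarith)
  set β := α / (α - 1) with hβ
  have hc : α.HolderConjugate β := Real.HolderConjugate.conjExponent hα
  have hβ1 : 1 < β := hc.symm.lt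
  have hβi : 1 / β = (α - 1) / α := by rw [hβ, one_div_div]
  have hγβ : -γ + -γ = 1 / β := by rw [hβi, hγ]; field_simp; ring
  have hβ0 : 1 / β ≠ 0 := by positivity
  set S := σ.rpowH γ with hS
  set R := σ.rpowH (-γ) with hR
  set K := T.rpowH (1 / 2) with hK
  have hSH : Sᴴ = S := ssc_rpowH_herm hσ.1 _
  have hRH : Rᴴ = R := ssc_rpowH_herm hσ.1 _
  have hKH : Kᴴ = K := ssc_rpowH_herm hT.1 _
  have hKK : K * K = T := by
    rw [hK, ssc_rpowH_mul hT (by norm_num), add_halves, ssc_rpowH_one hT.1]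
  have hRR : R * R = σ.rpowH (1 / β) := by
    rw [hR, ssc_rpowH_mul hσ (by rw [hγβ]; exact hβ0), hγβ]
  have hP1 : ρ * (S * R) = ρ := ssc_supp hσ hsupp hγ0
  have hP2 : (R * S) * ρ = ρ := by
    have h := congrArg Matrix.conjTranspose hP1
    rw [Matrix.conjTranspose_mul, Matrix.conjTranspose_mul, hSH, hRH, hρ.1.eq] at h
    exact h
  have hX : (S * ρ * S).PosSemidef := by
    have h := hρ.mul_mul_conjTranspose_same S
    rwa [hSH] at h
  have hY : ((R * K) * (K * R)).PosSemidef := by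
    have h := Matrix.posSemidef_self_mul_conjTranspose (R * K)
    rwa [Matrix.conjTranspose_mul, hRH, hKH] at h
  have hY' : ((K * R) * (R * K)).PosSemidef := by
    have h := Matrix.posSemidef_self_mul_conjTranspose (K * R)
    rwa [Matrix.conjTranspose_mul, hRH, hKH] at h
  have eY' : (K * R) * (R * K) = K * σ.rpowH (1 / β) * K := by
    rw [← hRR]; simp only [Matrix.mul_assoc]
  have htest : ∑ i, hY.1.eigenvalues i ^ β ≤ retr (σ * T) := by
    rw [ssc_comm hY.1 hY'.1]
    exact ssc_test hσ hT1 hKH hKK hβ1.le eY' hY'.1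
  have hYs : 0 ≤ ∑ i, hY.1.eigenvalues i ^ β :=
    Finset.sum_nonneg fun i _ => Real.rpow_nonneg (hY.eigenvalues_nonneg i) _
  have hXs : 0 ≤ ∑ i, hX.1.eigenvalues i ^ α :=
    Finset.sum_nonneg fun i _ => Real.rpow_nonneg (hX.eigenvalues_nonneg i) _
  have htr : retr (ρ * T) = retr ((S * ρ * S) * ((R * K) * (K * R))) := by
    have e : (S * ρ * S) * ((R * K) * (K * R)) = (S * (ρ * (S * R)) * T) * R := by
      rw [← hKK]; simp only [Matrix.mul_assoc]
    rw [e, hP1, retr, retr, Matrix.trace_mul_comm _ R]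
    congr 2
    rw [← Matrix.mul_assoc, ← Matrix.mul_assoc, hP2]
  rw [ssc_retr_rpowH hX.1]
  refine ⟨hYs.trans htest, hXs, ?_⟩
  rw [htr, ← hβi]
  refine (ssc_holder hX hY hc).trans ?_
  exact mul_le_mul_of_nonneg_left (Real.rpow_le_rpow hYs htest (by positivity))
    (Real.rpow_nonneg hXs _)

end helpers

/-- one-shot strong converse, sandwiched version.
For density operators `ρ, σ` with `supp ρ ⊆ supp σ` and any test `0 ≤ T ≤ 𝟙` with
`Tr[ρT] > 0`: for every `α > 1`,
`Tr[ρT] ≤ exp(-((α-1)/α)(-log Tr[σT] - D_α^*(ρ‖σ)))`, and consequently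
`Tr[ρT] ≤ exp(-sup_{α>1} ((α-1)/α)(-log Tr[σT] - D_α^*(ρ‖σ)))`. -/
theorem one_shot_strong_converse_sandwiched
    {ι : Type*} [Fintype ι] [DecidableEq ι]
    (ρ σ : Matrix ι ι ℂ)
    (hρ : ρ.PosSemidef) (hρtr : ρ.trace = 1)
    (hσ : σ.PosSemidef) (hσtr : σ.trace = 1)
    (hsupp : ∀ v : ι → ℂ, σ.mulVec v = 0 → ρ.mulVec v = 0)
    (T : Matrix ι ι ℂ) (hT : T.PosSemidef) (hT1 : (1 - T).PosSemidef)
    (hTρ : 0 < retr (ρ * T)) :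
    (∀ α : ℝ, 1 < α →
      retr (ρ * T) ≤ Real.exp (-((α - 1) / α *
        (-Real.log (retr (σ * T)) - sandwichedRenyiDiv α ρ σ)))) ∧
    retr (ρ * T) ≤ Real.exp (-(⨆ (α : ℝ) (_ : 1 < α),
      (α - 1) / α * (-Real.log (retr (σ * T)) - sandwichedRenyiDiv α ρ σ))) := by
  have key : ∀ α : ℝ, 1 < α →
      retr (ρ * T) ≤ Real.exp (-((α - 1) / α *
        (-Real.log (retr (σ * T)) - sandwichedRenyiDiv α ρ σ))) := by
    intro α hα
    obtain ⟨hs, hQ, hle⟩ := ssc_main ρ σ hρ hσ hsupp T hT hT1 α hα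
    rw [sandwichedRenyiDiv]
    generalize retr (Matrix.rpowH (Matrix.rpowH σ ((1 - α) / (2 * α)) * ρ *
      Matrix.rpowH σ ((1 - α) / (2 * α))) α) = Q at *
    generalize retr (σ * T) = s at *
    have hα0 : 0 < α := by linarith
    have hα1 : 0 < α - 1 := by linarith
    have hs' : 0 < s := by
      rcases hs.eq_or_lt with h | h
      · rw [← h, Real.zero_rpow (by positivity), mul_zero] at hle
        linarith
      · exact h
    have hQ' : 0 < Q := by
      rcases hQ.eq_or_lt with h | h
      · rw [← h, Real.zero_rpow (by positivity), zero_mul] at hle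
        linarith
      · exact h
    refine hle.trans (le_of_eq ?_)
    rw [Real.rpow_def_of_pos hs', Real.rpow_def_of_pos hQ', ← Real.exp_add]
    congr 1
    field_simp
    ring
  refine ⟨key, ?_⟩
  have ht1 : retr (ρ * T) ≤ 1 := by
    have hK := ssc_rpowH_herm hρ.1 (1 / 2)
    have hKK : ρ.rpowH (1 / 2) * ρ.rpowH (1 / 2) = ρ := by
      rw [ssc_rpowH_mul hρ (by norm_num), add_halves, ssc_rpowH_one hρ.1]
    have h := (hT1.mul_mul_conjTranspose_same (ρ.rpowH (1 / 2))).trace_nonneg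
    rw [hK, Matrix.trace_mul_comm, ← Matrix.mul_assoc, hKK, Matrix.mul_sub, Matrix.mul_one,
      Matrix.trace_sub, hρtr] at h
    have h2 := (Complex.le_def.mp h).1
    simp only [Complex.zero_re, Complex.sub_re, Complex.one_re] at h2
    rw [retr]
    linarith
  have hlog : Real.log (retr (ρ * T)) ≤ 0 := Real.log_nonpos hTρ.le ht1
  rw [← Real.log_le_iff_le_exp hTρ]
  rw [le_neg]
  refine Real.iSup_le (fun α => Real.iSup_le (fun hα => ?_) (by linarith)) (by linarith)
  have h := (Real.log_le_iff_le_exp hTρ).mpr (key α hα)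
  linarith


end
end

section
/- Let ρ and σ be density operators on a finite-dimensional complex Hilbert space with supp(ρ) ⊆ supp(σ), and let α > 1. Then D_α^𝕄(ρ‖σ) = sup over operators T with 0 ≤ T ≤ 𝟙, T not orthogonal to ρ (i.e. Tr[ρT] > 0), of { (α/(α−1)) log Tr[ρT] − log Tr[σ T^{α/(α−1)}] }. -/
open Matrix
open scoped ComplexOrder Kronecker

noncomputable section

open scoped Classical in
/-- Classical Rényi divergence of order `α` of two (finitely supported) probability
mass functions, with value `+∞` when `α > 1` and absolute continuity fails. -/
def renyiDivE (α : ℝ) {k : ℕ} (p q : Fin k → ℝ) : EReal :=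
  if α < 1 ∨ ∀ i, q i = 0 → p i = 0 then
    (((α - 1)⁻¹ * Real.log (∑ i, p i ^ α * q i ^ (1 - α)) : ℝ) : EReal)
  else (⊤ : EReal)

/-- Measured Rényi divergence: supremum of classical Rényi divergences of the outcome
distributions over all finite POVMs. -/
def measuredRenyiDiv {ι : Type*} [Fintype ι] [DecidableEq ι]
    (α : ℝ) (ρ σ : Matrix ι ι ℂ) : EReal :=
  ⨆ (k : ℕ) (P : Fin k → Matrix ι ι ℂ) (_ : ∀ i, (P i).PosSemidef) (_ : ∑ i, P i = 1),
    renyiDivE α (fun i => retr (ρ * P i)) (fun i => retr (σ * P i))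


section Helpers
open MeasureTheory

variable {ι : Type*} [Fintype ι] [DecidableEq ι]

/-- scalar consequence of the integral representation of `x ^ r`. -/
lemma scalar_rpow_compare {κ κ' : Type*} [Fintype κ] [Fintype κ'] (m l : κ → ℝ) (n w : κ' → ℝ)
    (hl : ∀ j, 0 ≤ l j) (hw : ∀ i, 0 ≤ w i) (r : ℝ) (hr : r ∈ Set.Ioo (0:ℝ) 1)
    (hs : ∑ j, m j = ∑ i, n i)
    (h : ∀ t : ℝ, 0 < t → ∑ j, (t + l j)⁻¹ * m j ≤ ∑ i, (t + w i)⁻¹ * n i) :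
    ∑ i, w i ^ r * n i ≤ ∑ j, l j ^ r * m j := by
  have key : ∫ t in Set.Ioi (0:ℝ), ∑ i, Real.rpowIntegrand₀₁ r t (w i) * n i
      ≤ ∫ t in Set.Ioi (0:ℝ), ∑ j, Real.rpowIntegrand₀₁ r t (l j) * m j := by
    apply setIntegral_mono_on
    · exact integrable_finsetSum _ fun i _ =>
        (Real.integrableOn_rpowIntegrand₀₁_Ioi hr (hw i)).mul_const _
    · exact integrable_finsetSum _ fun i _ =>
        (Real.integrableOn_rpowIntegrand₀₁_Ioi hr (hl i)).mul_const _
    · exact measurableSet_Ioi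
    · intro t ht
      have ht : 0 < t := ht
      have e1 : ∑ i, Real.rpowIntegrand₀₁ r t (w i) * n i
          = t ^ r * (t⁻¹ * ∑ i, n i - ∑ i, (t + w i)⁻¹ * n i) := by
        simp only [Real.rpowIntegrand₀₁, Finset.mul_sum, mul_sub, ← Finset.sum_sub_distrib]
        exact Finset.sum_congr rfl fun i _ => by ring
      have e2 : ∑ i, Real.rpowIntegrand₀₁ r t (l i) * m i
          = t ^ r * (t⁻¹ * ∑ i, m i - ∑ i, (t + l i)⁻¹ * m i) := by
        simp only [Real.rpowIntegrand₀₁, Finset.mul_sum, mul_sub, ← Finset.sum_sub_distrib]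
        exact Finset.sum_congr rfl fun i _ => by ring
      rw [e1, e2, hs]
      have := h t ht
      gcongr
  rw [integral_finsetSum _ fun i _ =>
        (Real.integrableOn_rpowIntegrand₀₁_Ioi hr (hw i)).mul_const _,
      integral_finsetSum _ fun i _ =>
        (Real.integrableOn_rpowIntegrand₀₁_Ioi hr (hl i)).mul_const _] at key
  simp only [integral_mul_const] at key
  have hc := Real.integral_rpowIntegrand₀₁_one_pos hr
  set c := ∫ t in Set.Ioi (0:ℝ), Real.rpowIntegrand₀₁ r t 1
  have k1 : ∑ i, (∫ t in Set.Ioi (0:ℝ), Real.rpowIntegrand₀₁ r t (w i)) * n i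
      = c * ∑ i, w i ^ r * n i := by
    rw [Finset.mul_sum]
    refine Finset.sum_congr rfl fun i _ => ?_
    rw [Real.integral_rpowIntegrand₀₁_eq_rpow_mul_const hr (hw i)]; ring
  have k2 : ∑ i, (∫ t in Set.Ioi (0:ℝ), Real.rpowIntegrand₀₁ r t (l i)) * m i
      = c * ∑ i, l i ^ r * m i := by
    rw [Finset.mul_sum]
    refine Finset.sum_congr rfl fun i _ => ?_
    rw [Real.integral_rpowIntegrand₀₁_eq_rpow_mul_const hr (hl i)]; ring
  rw [k1, k2] at key
  exact le_of_mul_le_mul_left key hc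

open scoped MatrixOrder in
lemma psd_factor {A : Matrix ι ι ℂ} (hA : A.PosSemidef) : ∃ B : Matrix ι ι ℂ, A = Bᴴ * B := by
  have := (CStarAlgebra.nonneg_iff_eq_star_mul_self (a := A)).1 hA.nonneg
  exact this

lemma retr_mul_nonneg {A B : Matrix ι ι ℂ} (hA : A.PosSemidef) (hB : B.PosSemidef) :
    0 ≤ retr (A * B) := by
  obtain ⟨C, rfl⟩ := psd_factor hA
  have : (C * B * Cᴴ).trace = (Cᴴ * C * B).trace := by
    rw [Matrix.trace_mul_comm, ← Matrix.mul_assoc]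
  rw [retr, ← this]
  exact (Complex.le_def.1 (hB.mul_mul_conjTranspose_same C).trace_nonneg).1

lemma mul_eq_zero_of_retr {A B : Matrix ι ι ℂ} (hA : A.PosSemidef) (hB : B.PosSemidef)
    (h : retr (A * B) = 0) : A * B = 0 := by
  obtain ⟨C, rfl⟩ := psd_factor hA
  obtain ⟨D, rfl⟩ := psd_factor hB
  have e : (Cᴴ * C * (Dᴴ * D)).trace = ((C * Dᴴ)ᴴ * (C * Dᴴ)).trace := by
    rw [Matrix.conjTranspose_mul, Matrix.conjTranspose_conjTranspose, Matrix.mul_assoc D,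
      Matrix.trace_mul_comm D]
    simp only [Matrix.mul_assoc]
  have hn := Complex.le_def.1 (Matrix.posSemidef_conjTranspose_mul_self (C * Dᴴ)).trace_nonneg
  have h0 : ((C * Dᴴ)ᴴ * (C * Dᴴ)).trace = 0 := by
    apply Complex.ext
    · rw [← e]; exact h
    · exact hn.2.symm
  have := Matrix.trace_conjTranspose_mul_self_eq_zero_iff.1 h0
  calc Cᴴ * C * (Dᴴ * D) = Cᴴ * (C * Dᴴ) * D := by simp only [Matrix.mul_assoc]
    _ = 0 := by rw [this]; simp

lemma retr_ac {ρ σ B : Matrix ι ι ℂ} (hσ : σ.PosSemidef) (hB : B.PosSemidef)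
    (hsupp : ∀ v : ι → ℂ, σ.mulVec v = 0 → ρ.mulVec v = 0)
    (h : retr (σ * B) = 0) : retr (ρ * B) = 0 := by
  have h0 := mul_eq_zero_of_retr hσ hB h
  have : ρ * B = 0 := by
    ext i j
    have h1 : σ.mulVec (fun k => B k j) = 0 := by
      ext i'; exact congrFun (congrFun h0 i') j
    exact congrFun (hsupp _ h1) i
  rw [this]; simp [retr]

lemma retr_sum {κ : Type*} [Fintype κ] (ρ : Matrix ι ι ℂ) (w : κ → ℝ) (P : κ → Matrix ι ι ℂ) :
    retr (ρ * ∑ i, (w i : ℂ) • P i) = ∑ i, w i * retr (ρ * P i) := by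
  simp [retr, Finset.mul_sum, Matrix.trace_sum]

/-- spectral function. -/
def fcH {A : Matrix ι ι ℂ} (hA : A.IsHermitian) (f : ℝ → ℝ) : Matrix ι ι ℂ :=
  (hA.eigenvectorUnitary : Matrix ι ι ℂ) *
      Matrix.diagonal (fun i => ((f (hA.eigenvalues i) : ℝ) : ℂ)) *
      star (hA.eigenvectorUnitary : Matrix ι ι ℂ)

lemma fcH_eq_cfc {A : Matrix ι ι ℂ} (hA : A.IsHermitian) (f : ℝ → ℝ) :
    fcH hA f = cfc f A := by
  rw [hA.cfc_eq]; rfl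

lemma rpowH_eq {A : Matrix ι ι ℂ} (hA : A.IsHermitian) (p : ℝ) :
    A.rpowH p = fcH hA (fun x => x ^ p) := by
  rw [Matrix.rpowH, dif_pos hA]; rfl

lemma fcH_id {A : Matrix ι ι ℂ} (hA : A.IsHermitian) : fcH hA (fun x => x) = A := by
  rw [fcH_eq_cfc]; exact cfc_id' ℝ A (show IsSelfAdjoint A from hA)

lemma fcH_mul {A : Matrix ι ι ℂ} (hA : A.IsHermitian) (f g : ℝ → ℝ) :
    fcH hA f * fcH hA g = fcH hA (fun x => f x * g x) := by
  have hU : star (hA.eigenvectorUnitary : Matrix ι ι ℂ) * (hA.eigenvectorUnitary : Matrix ι ι ℂ)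
    = 1 := Unitary.coe_star_mul_self _
  simp only [fcH]
  set U := (hA.eigenvectorUnitary : Matrix ι ι ℂ)
  calc _ = U * Matrix.diagonal (fun i => ((f (hA.eigenvalues i) : ℝ) : ℂ)) * (star U * U) *
        Matrix.diagonal (fun i => ((g (hA.eigenvalues i) : ℝ) : ℂ)) * star U := by
          simp only [Matrix.mul_assoc]
    _ = _ := by rw [hU, Matrix.mul_one, Matrix.mul_assoc U, Matrix.diagonal_mul_diagonal]; simp

lemma fcH_const {A : Matrix ι ι ℂ} (hA : A.IsHermitian) (t : ℝ) :
    fcH hA (fun _ => t) = (t : ℂ) • 1 := by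
  have hU : (hA.eigenvectorUnitary : Matrix ι ι ℂ) * star (hA.eigenvectorUnitary : Matrix ι ι ℂ)
    = 1 := Unitary.coe_mul_star_self _
  have : Matrix.diagonal (fun _ : ι => (t : ℂ)) = (t : ℂ) • (1 : Matrix ι ι ℂ) := by
    ext i j; simp [Matrix.diagonal_apply, Matrix.one_apply]
  rw [fcH, this]; simp [hU]

lemma fcH_add {A : Matrix ι ι ℂ} (hA : A.IsHermitian) (f g : ℝ → ℝ) :
    fcH hA f + fcH hA g = fcH hA (fun x => f x + g x) := by
  simp only [fcH, ← Matrix.add_mul, ← Matrix.mul_add, Matrix.diagonal_add]; simp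

lemma fcH_congr {A : Matrix ι ι ℂ} (hA : A.IsHermitian) (f g : ℝ → ℝ)
    (h : ∀ j, f (hA.eigenvalues j) = g (hA.eigenvalues j)) : fcH hA f = fcH hA g := by
  simp only [fcH, h]

lemma conj_diag_psd (U : Matrix ι ι ℂ) (d : ι → ℝ) (h : ∀ j, 0 ≤ d j) :
    (U * Matrix.diagonal (fun i => (d i : ℂ)) * star U).PosSemidef := by
  apply Matrix.PosSemidef.mul_mul_conjTranspose_same
  rw [Matrix.posSemidef_diagonal_iff]
  intro i; exact_mod_cast h i

lemma fcH_psd {A : Matrix ι ι ℂ} (hA : A.IsHermitian) (f : ℝ → ℝ)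
    (h : ∀ j, 0 ≤ f (hA.eigenvalues j)) : (fcH hA f).PosSemidef :=
  conj_diag_psd _ _ h

lemma retr_conj_diag (ρ U : Matrix ι ι ℂ) (d : ι → ℝ) :
    retr (ρ * (U * Matrix.diagonal (fun i => (d i : ℂ)) * star U))
      = ∑ j, d j * ((star U * ρ * U) j j).re := by
  have : (ρ * (U * Matrix.diagonal (fun i => (d i : ℂ)) * star U)).trace
      = (star U * ρ * U * Matrix.diagonal (fun i => (d i : ℂ))).trace := by
    rw [← Matrix.mul_assoc, Matrix.trace_mul_comm]; simp only [Matrix.mul_assoc]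
  rw [retr, this, Matrix.trace]
  simp [Matrix.mul_diagonal, mul_comm]

lemma fcH_sub_one {A : Matrix ι ι ℂ} (hA : A.IsHermitian) (f : ℝ → ℝ) :
    1 - fcH hA f = fcH hA (fun x => 1 - f x) := by
  have := fcH_add hA f (fun x => 1 - f x)
  simp only [add_sub_cancel] at this
  rw [fcH_const] at this
  rw [sub_eq_iff_eq_add', this]; simp

lemma eig_le_one {A : Matrix ι ι ℂ} (hA : A.IsHermitian) (h : (1 - A).PosSemidef) (j : ι) :
    hA.eigenvalues j ≤ 1 := by
  rw [← fcH_id hA, fcH_sub_one, fcH] at h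
  have h2 := h.mul_mul_conjTranspose_same (star (hA.eigenvectorUnitary : Matrix ι ι ℂ))
  have hU : star (hA.eigenvectorUnitary : Matrix ι ι ℂ) * (hA.eigenvectorUnitary : Matrix ι ι ℂ)
    = 1 := Unitary.coe_star_mul_self _
  rw [← Matrix.star_eq_conjTranspose, star_star] at h2
  set U := (hA.eigenvectorUnitary : Matrix ι ι ℂ)
  have e : ∀ D : Matrix ι ι ℂ, star U * (U * D * star U) * U = D := by
    intro D
    calc _ = (star U * U) * D * (star U * U) := by simp only [Matrix.mul_assoc]
      _ = D := by rw [hU]; simp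
  rw [e, Matrix.posSemidef_diagonal_iff] at h2
  have := h2 j
  have h3 : 0 ≤ 1 - hA.eigenvalues j := by exact_mod_cast this
  linarith

lemma resolvent_ineq {k : ℕ} (P : Fin k → Matrix ι ι ℂ) (hP : ∀ i, (P i).PosSemidef)
    (h1 : ∑ i, P i = 1) (w : Fin k → ℝ) (hw : ∀ i, 0 ≤ w i) {ω : Matrix ι ι ℂ}
    (hω : ω = ∑ i, (w i : ℂ) • P i) (hpsd : ω.PosSemidef) (ρ : Matrix ι ι ℂ) (hρ : ρ.PosSemidef)
    (t : ℝ) (ht : 0 < t) :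
    retr (ρ * fcH hpsd.isHermitian (fun x => (t + x)⁻¹)) ≤ ∑ i, (t + w i)⁻¹ * retr (ρ * P i) := by
  set hH := hpsd.isHermitian
  set X := fcH hH (fun x => (t + x)⁻¹) with hX
  have hXh : Xᴴ = X := (fcH_psd hH _ fun j => by
    have := hpsd.eigenvalues_nonneg j
    positivity).isHermitian
  have hXX : X * (∑ i, ((t + w i : ℝ) : ℂ) • P i) * X = X := by
    have e : ∑ i, ((t + w i : ℝ) : ℂ) • P i = fcH hH (fun x => t + x) := by
      rw [← fcH_add hH (fun _ => t) (fun x => x), fcH_const, fcH_id, hω, ← h1, Finset.smul_sum,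
        ← Finset.sum_add_distrib]
      exact Finset.sum_congr rfl fun i _ => by push_cast; rw [add_smul]
    rw [e, hX, fcH_mul, fcH_mul]
    refine fcH_congr _ _ _ fun j => ?_
    have := hpsd.eigenvalues_nonneg j
    have : t + hH.eigenvalues j ≠ 0 := by positivity
    field_simp
  have hsum : ∑ i, ((t + w i : ℝ) : ℂ) •
      ((X - (((t + w i)⁻¹ : ℝ) : ℂ) • 1) * P i * (X - (((t + w i)⁻¹ : ℝ) : ℂ) • 1)ᴴ)
      = ∑ i, (((t + w i)⁻¹ : ℝ) : ℂ) • P i - X := by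
    have e : ∀ i, ((t + w i : ℝ) : ℂ) •
      ((X - (((t + w i)⁻¹ : ℝ) : ℂ) • 1) * P i * (X - (((t + w i)⁻¹ : ℝ) : ℂ) • 1)ᴴ)
      = X * (((t + w i : ℝ) : ℂ) • P i) * X - X * P i - P i * X
        + (((t + w i)⁻¹ : ℝ) : ℂ) • P i := by
      intro i
      have hne : ((t + w i : ℝ) : ℂ) ≠ 0 := by
        have := hw i
        exact_mod_cast (by positivity : t + w i ≠ 0)
      rw [Matrix.conjTranspose_sub, hXh, Matrix.conjTranspose_smul, Matrix.conjTranspose_one]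
      rw [Complex.star_def, Complex.conj_ofReal]
      simp only [Complex.ofReal_inv]
      generalize ((t + w i : ℝ) : ℂ) = a at hne
      simp only [sub_mul, mul_sub, smul_sub, Matrix.mul_smul, Matrix.smul_mul, Matrix.one_mul,
        Matrix.mul_one, smul_smul]
      rw [mul_inv_cancel₀ hne]
      have h3 : a * (a⁻¹ * a⁻¹) = a⁻¹ := by field_simp
      simp only [one_smul, h3]
      abel
    rw [Finset.sum_congr rfl fun i _ => e i]
    rw [Finset.sum_add_distrib, Finset.sum_sub_distrib, Finset.sum_sub_distrib,
      ← Finset.sum_mul, ← Finset.mul_sum, ← Finset.mul_sum, ← Finset.sum_mul, hXX, h1]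
    simp only [Matrix.one_mul, Matrix.mul_one]
    abel
  have hn := congrArg (fun M => retr (ρ * M)) hsum
  rw [retr_sum] at hn
  have h0 : 0 ≤ retr (ρ * (∑ i, (((t + w i)⁻¹ : ℝ) : ℂ) • P i - X)) := by
    rw [← hn]
    refine Finset.sum_nonneg fun i _ => mul_nonneg (by have := hw i; positivity) ?_
    exact retr_mul_nonneg hρ ((hP i).mul_mul_conjTranspose_same _)
  rw [← retr_sum]
  rw [Matrix.mul_sub, retr, Matrix.trace_sub, Complex.sub_re] at h0
  simp only [retr]
  linarith

lemma jensen_rpow {k : ℕ} (P : Fin k → Matrix ι ι ℂ) (hP : ∀ i, (P i).PosSemidef)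
    (h1 : ∑ i, P i = 1) (w : Fin k → ℝ) (hw : ∀ i, 0 ≤ w i) {ω : Matrix ι ι ℂ}
    (hω : ω = ∑ i, (w i : ℂ) • P i) (hpsd : ω.PosSemidef) (ρ : Matrix ι ι ℂ) (hρ : ρ.PosSemidef)
    (r : ℝ) (hr : r ∈ Set.Ioo (0:ℝ) 1) :
    ∑ i, w i ^ r * retr (ρ * P i) ≤ retr (ρ * fcH hpsd.isHermitian (fun x => x ^ r)) := by
  rw [fcH, retr_conj_diag]
  refine scalar_rpow_compare _ _ _ _ hpsd.eigenvalues_nonneg hw r hr ?_ ?_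
  · have a := retr_conj_diag ρ (hpsd.isHermitian.eigenvectorUnitary : Matrix ι ι ℂ) (fun _ => 1)
    have b := retr_sum ρ (fun _ => 1) P
    have c := fcH_const hpsd.isHermitian 1
    simp only [fcH] at c
    rw [c] at a
    simp only [one_mul, Complex.ofReal_one, one_smul, h1] at a b
    rw [← a, b]
  · intro t ht
    have := resolvent_ineq P hP h1 w hw hω hpsd ρ hρ t ht
    rwa [fcH, retr_conj_diag] at this

/-- the Hölder step. -/
lemma holder_step {κ : Type*} [Fintype κ] (l p q : κ → ℝ) (hl : ∀ j, 0 ≤ l j) (hp : ∀ j, 0 ≤ p j)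
    (hq : ∀ j, 0 ≤ q j) (hac : ∀ j, q j = 0 → p j = 0) (α : ℝ) (hα : 1 < α)
    (hpos : 0 < ∑ j, l j * p j) :
    α / (α - 1) * Real.log (∑ j, l j * p j) - Real.log (∑ j, l j ^ (α / (α - 1)) * q j)
      ≤ (α - 1)⁻¹ * Real.log (∑ j, p j ^ α * q j ^ (1 - α)) := by
  have hα1 : 0 < α - 1 := by linarith
  have hα0 : 0 < α := by linarith
  set β := α / (α - 1) with hβ
  have hβ0 : 0 < β := by positivity
  have hconj : β.HolderConjugate α := (Real.HolderConjugate.conjExponent hα).symm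
  have H := Real.inner_le_Lp_mul_Lq_of_nonneg Finset.univ hconj
    (f := fun j => l j * q j ^ (1 / β)) (g := fun j => p j * q j ^ (-(1 / β)))
    (fun i _ => mul_nonneg (hl i) (Real.rpow_nonneg (hq i) _))
    (fun i _ => mul_nonneg (hp i) (Real.rpow_nonneg (hq i) _))
  have e1 : ∑ j, (l j * q j ^ (1 / β)) * (p j * q j ^ (-(1 / β))) = ∑ j, l j * p j := by
    refine Finset.sum_congr rfl fun j _ => ?_
    rcases (hq j).eq_or_lt with h | h
    · rw [hac j h.symm]; simp
    · rw [Real.rpow_neg h.le]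
      have := (Real.rpow_pos_of_pos h (1 / β)).ne'
      field_simp
  have e2 : ∑ j, (l j * q j ^ (1 / β)) ^ β = ∑ j, l j ^ β * q j := by
    refine Finset.sum_congr rfl fun j _ => ?_
    rw [Real.mul_rpow (hl j) (Real.rpow_nonneg (hq j) _), ← Real.rpow_mul (hq j),
      one_div_mul_cancel hβ0.ne', Real.rpow_one]
  have e3 : ∑ j, (p j * q j ^ (-(1 / β))) ^ α = ∑ j, p j ^ α * q j ^ (1 - α) := by
    refine Finset.sum_congr rfl fun j _ => ?_
    rw [Real.mul_rpow (hp j) (Real.rpow_nonneg (hq j) _), ← Real.rpow_mul (hq j)]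
    congr 2
    rw [hβ]; field_simp; ring
  rw [e1, e2, e3] at H
  have hS0 : 0 ≤ ∑ j, l j ^ β * q j :=
    Finset.sum_nonneg fun j _ => mul_nonneg (Real.rpow_nonneg (hl j) _) (hq j)
  have hQ0 : 0 ≤ ∑ j, p j ^ α * q j ^ (1 - α) :=
    Finset.sum_nonneg fun j _ => mul_nonneg (Real.rpow_nonneg (hp j) _) (Real.rpow_nonneg (hq j) _)
  set S := ∑ j, l j ^ β * q j
  set Q := ∑ j, p j ^ α * q j ^ (1 - α)
  have hS : 0 < S := by
    rcases hS0.eq_or_lt with h | h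
    · rw [← h, Real.zero_rpow (by positivity), zero_mul] at H; linarith
    · exact h
  have hQ : 0 < Q := by
    rcases hQ0.eq_or_lt with h | h
    · rw [← h, Real.zero_rpow (by positivity), mul_zero] at H; linarith
    · exact h
  have L := Real.log_le_log hpos H
  rw [Real.log_mul (by positivity) (by positivity), Real.log_rpow hS, Real.log_rpow hQ] at L
  have L2 := mul_le_mul_of_nonneg_left L hβ0.le
  have : β * (1 / β * Real.log S + 1 / α * Real.log Q)
      = Real.log S + (α - 1)⁻¹ * Real.log Q := by
    rw [hβ]; field_simp
  linarith

end Helpers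

set_option maxHeartbeats 1000000

/-- variational expression for the measured Rényi divergence, `α > 1`.
`D_α^𝕄(ρ‖σ) = sup { (α/(α-1)) log Tr[ρT] - log Tr[σ T^{α/(α-1)}] : 0 ≤ T ≤ 𝟙, Tr[ρT] > 0 }`. -/
theorem measured_renyi_variational_gt_one
    {ι : Type*} [Fintype ι] [DecidableEq ι]
    (ρ σ : Matrix ι ι ℂ)
    (hρ : ρ.PosSemidef) (hρtr : ρ.trace = 1)
    (hσ : σ.PosSemidef) (hσtr : σ.trace = 1)
    (hsupp : ∀ v : ι → ℂ, σ.mulVec v = 0 → ρ.mulVec v = 0)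
    (α : ℝ) (hα : 1 < α) :
    measuredRenyiDiv α ρ σ =
      ⨆ (T : Matrix ι ι ℂ)
        (_ : T.PosSemidef ∧ (1 - T).PosSemidef ∧ 0 < retr (ρ * T)),
        ((α / (α - 1) * Real.log (retr (ρ * T))
          - Real.log (retr (σ * Matrix.rpowH T (α / (α - 1)))) : ℝ) : EReal) := by
  have hα1 : 0 < α - 1 := by linarith
  have hα0 : 0 < α := by linarith
  apply le_antisymm
  · unfold measuredRenyiDiv
    refine iSup_le fun k => iSup_le fun P => iSup_le fun hP => iSup_le fun h1 => ?_
    set p : Fin k → ℝ := fun i => retr (ρ * P i) with hp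
    set q : Fin k → ℝ := fun i => retr (σ * P i) with hq
    have hp0 : ∀ i, 0 ≤ p i := fun i => retr_mul_nonneg hρ (hP i)
    have hq0 : ∀ i, 0 ≤ q i := fun i => retr_mul_nonneg hσ (hP i)
    have hac : ∀ i, q i = 0 → p i = 0 := fun i h => retr_ac hσ (hP i) hsupp h
    have hpsum : ∑ i, p i = 1 := by
      have b := retr_sum ρ (fun _ => 1) P
      simp only [one_mul, Complex.ofReal_one, one_smul, h1, Matrix.mul_one] at b
      rw [hp, ← b, retr, hρtr]; simp
    rw [renyiDivE, if_pos (Or.inr hac)]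
    set Q := ∑ i, p i ^ α * q i ^ (1 - α) with hQdef
    have hQ : 0 < Q := by
      obtain ⟨i, -, hi⟩ : ∃ i ∈ Finset.univ, 0 < p i := by
        by_contra! hcon
        have := Finset.sum_nonpos hcon
        linarith
      have hqi : 0 < q i := lt_of_le_of_ne (hq0 i) fun h => hi.ne' (hac i h.symm)
      refine Finset.sum_pos' (fun j _ => mul_nonneg (Real.rpow_nonneg (hp0 j) _)
        (Real.rpow_nonneg (hq0 j) _)) ⟨i, Finset.mem_univ _, ?_⟩
      positivity
    set r := (α - 1) / α with hr
    have hr01 : r ∈ Set.Ioo (0:ℝ) 1 :=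
      ⟨by positivity, by rw [hr, div_lt_one hα0]; linarith⟩
    set u : Fin k → ℝ := fun i => (p i / q i) ^ α with hu
    have hu0 : ∀ i, 0 ≤ u i := fun i => Real.rpow_nonneg (div_nonneg (hp0 i) (hq0 i)) _
    set c : ℝ := (1 + ∑ i, u i)⁻¹ with hc
    have hus : 0 ≤ ∑ i, u i := Finset.sum_nonneg fun i _ => hu0 i
    have hc0 : 0 < c := by positivity
    set w : Fin k → ℝ := fun i => c * u i with hw
    have hw0 : ∀ i, 0 ≤ w i := fun i => mul_nonneg hc0.le (hu0 i)
    have hw1 : ∀ i, w i ≤ 1 := by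
      intro i
      have : u i ≤ ∑ i, u i := Finset.single_le_sum (fun i _ => hu0 i) (Finset.mem_univ i)
      rw [hw, hc]
      simp only
      rw [inv_mul_le_iff₀ (by positivity)]
      linarith
    obtain ⟨ω, hω⟩ : ∃ ω, ω = ∑ i, (w i : ℂ) • P i := ⟨_, rfl⟩
    have hωpsd : ω.PosSemidef := by
      rw [hω]
      refine Matrix.posSemidef_sum _ fun i _ => (hP i).smul ?_
      exact_mod_cast hw0 i
    have hω1 : (1 - ω).PosSemidef := by
      have : 1 - ω = ∑ i, ((1 - w i : ℝ) : ℂ) • P i := by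
        rw [hω, ← h1, ← Finset.sum_sub_distrib]
        exact Finset.sum_congr rfl fun i _ => by push_cast; rw [sub_smul, one_smul]
      rw [this]
      refine Matrix.posSemidef_sum _ fun i _ => (hP i).smul ?_
      exact_mod_cast sub_nonneg.2 (hw1 i)
    set hH := hωpsd.isHermitian
    obtain ⟨T, hT⟩ : ∃ T, T = fcH hH (fun x => x ^ r) := ⟨_, rfl⟩
    have hTpsd : T.PosSemidef := by
      rw [hT]; exact fcH_psd _ _ fun j => Real.rpow_nonneg (hωpsd.eigenvalues_nonneg j) _
    have hT1 : (1 - T).PosSemidef := by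
      rw [hT, fcH_sub_one]
      refine fcH_psd _ _ fun j => sub_nonneg.2 ?_
      exact Real.rpow_le_one (hωpsd.eigenvalues_nonneg j) (eig_le_one hH hω1 j) hr01.1.le
    have hTβ : T.rpowH (α / (α - 1)) = ω := by
      rw [rpowH_eq hTpsd.isHermitian, fcH_eq_cfc, hT, fcH_eq_cfc]
      have hfin : ∀ A : Matrix ι ι ℂ, ∀ f : ℝ → ℝ, ContinuousOn f (spectrum ℝ A) :=
        fun A f => (Matrix.finite_real_spectrum (A := A)).continuousOn f
      rw [← cfc_comp' (fun x : ℝ => x ^ (α / (α - 1))) (fun x : ℝ => x ^ r) ω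
        (((Matrix.finite_real_spectrum (A := ω)).image _).continuousOn _) (hfin _ _)
        (show IsSelfAdjoint ω from hH), ← fcH_eq_cfc hH]
      conv_rhs => rw [← fcH_id hH]
      refine fcH_congr _ _ _ fun j => ?_
      rw [← Real.rpow_mul (hωpsd.eigenvalues_nonneg j)]
      have : r * (α / (α - 1)) = 1 := by rw [hr]; field_simp
      rw [this, Real.rpow_one]
    have hσω : retr (σ * ω) = c * Q := by
      rw [hω, retr_sum, hQdef, Finset.mul_sum]
      refine Finset.sum_congr rfl fun i _ => ?_
      change c * (p i / q i) ^ α * q i = _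
      rcases (hq0 i).eq_or_lt with h | h
      · rw [hac i h.symm, ← h]; simp [Real.zero_rpow hα0.ne']
      · rw [Real.div_rpow (hp0 i) h.le, Real.rpow_sub h, Real.rpow_one]; field_simp
    have hρT : c ^ r * Q ≤ retr (ρ * T) := by
      rw [hT]
      refine le_trans (le_of_eq ?_) (jensen_rpow P hP h1 w hw0 hω hωpsd ρ hρ r hr01)
      rw [hQdef, Finset.mul_sum]
      refine Finset.sum_congr rfl fun i _ => ?_
      change _ = (c * (p i / q i) ^ α) ^ r * p i
      rcases (hp0 i).eq_or_lt with h' | h'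
      · rw [← h']; simp [Real.zero_rpow hα0.ne']
      have h : 0 < q i := lt_of_le_of_ne (hq0 i) fun h => h'.ne' (hac i h.symm)
      have hαr : α * r = α - 1 := by rw [hr]; field_simp
      rw [Real.mul_rpow hc0.le (by positivity), ← Real.rpow_mul (by positivity), hαr,
        Real.div_rpow h'.le h.le, Real.rpow_sub h', Real.rpow_sub h, Real.rpow_sub h,
        Real.rpow_one, Real.rpow_one]
      field_simp
    have hcQ : 0 < c ^ r * Q := by positivity
    refine le_trans ?_ (le_iSup₂_of_le T ⟨hTpsd, hT1, hcQ.trans_le hρT⟩ le_rfl)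
    rw [hTβ, hσω, EReal.coe_le_coe_iff, Real.log_mul hc0.ne' hQ.ne']
    have L := Real.log_le_log hcQ hρT
    rw [Real.log_mul (by positivity) hQ.ne', Real.log_rpow hc0] at L
    have L2 := mul_le_mul_of_nonneg_left L (show 0 ≤ α / (α - 1) by positivity)
    have : α / (α - 1) * (r * Real.log c + Real.log Q)
        = Real.log c + Real.log Q + (α - 1)⁻¹ * Real.log Q := by
      rw [hr]; field_simp; ring
    linarith
  · refine iSup₂_le fun T hT => ?_
    obtain ⟨hT0, hT1, hTpos⟩ := hT
    set hH := hT0.isHermitian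
    set U := (hH.eigenvectorUnitary : Matrix ι ι ℂ) with hU
    let e := Fintype.equivFin ι
    let P : Fin (Fintype.card ι) → Matrix ι ι ℂ := fun i =>
      U * Matrix.diagonal (fun j => (((if j = e.symm i then 1 else 0 : ℝ)) : ℂ)) * star U
    have hP : ∀ i, (P i).PosSemidef := fun i => conj_diag_psd U _ fun j => by
      split_ifs <;> norm_num
    have hrP : ∀ (A : Matrix ι ι ℂ) i, retr (A * P i)
        = ((star U * A * U) (e.symm i) (e.symm i)).re := by
      intro A i
      simp only [P]
      rw [retr_conj_diag]; simp
    have h1 : ∑ i, P i = 1 := by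
      have : ∑ i, Matrix.diagonal (fun j => (((if j = e.symm i then 1 else 0 : ℝ)) : ℂ))
          = (1 : Matrix ι ι ℂ) := by
        rw [e.symm.sum_comp (fun a => Matrix.diagonal
          (fun j => (((if j = a then 1 else 0 : ℝ)) : ℂ)))]
        ext a b
        rw [Matrix.sum_apply]
        by_cases hab : a = b
        · subst hab; simp [apply_ite]
        · simp [hab]
      simp only [P]
      rw [← Finset.sum_mul, ← Finset.mul_sum, this, Matrix.mul_one]
      exact Unitary.coe_mul_star_self _
    have hdiag : ∀ (A : Matrix ι ι ℂ) (f : ℝ → ℝ), retr (A * fcH hH f)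
        = ∑ i, f (hH.eigenvalues (e.symm i)) * retr (A * P i) := by
      intro A f
      simp only [hrP]
      rw [fcH, retr_conj_diag, e.symm.sum_comp (fun a => f (hH.eigenvalues a) *
        ((star U * A * U) a a).re)]
    have hρT := hdiag ρ (fun x => x)
    rw [fcH_id] at hρT
    rw [rpowH_eq hH, hdiag, hρT]
    rw [hρT] at hTpos
    have hac : ∀ i, retr (σ * P i) = 0 → retr (ρ * P i) = 0 :=
      fun i h => retr_ac hσ (hP i) hsupp h
    unfold measuredRenyiDiv
    refine le_iSup_of_le _ (le_iSup_of_le P (le_iSup_of_le hP (le_iSup_of_le h1 ?_)))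
    rw [renyiDivE, if_pos (Or.inr hac), EReal.coe_le_coe_iff]
    exact holder_step _ _ _ (fun i => hT0.eigenvalues_nonneg _)
      (fun i => retr_mul_nonneg hρ (hP i)) (fun i => retr_mul_nonneg hσ (hP i)) hac α hα hTpos

end
end

section
/- Let ρ and σ be density operators on a finite-dimensional complex Hilbert space with supp(ρ) ⊆ supp(σ), and let α ∈ (0,1). Then D_α^𝕄(ρ‖σ) = sup over positive definite operators T with 0 < T ≤ 𝟙 of { (α/(α−1)) log Tr[ρT] − log Tr[σ T^{α/(α−1)}] } (note α/(α−1) < 0, so T^{α/(α−1)} is a negative power of T). -/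
open Matrix
open scoped ComplexOrder Kronecker

noncomputable section

/-! ### Auxiliary facts -/

theorem aux_retr_add {ι : Type*} [Fintype ι] (A B : Matrix ι ι ℂ) :
    retr (A + B) = retr A + retr B := by
  simp [retr]

theorem aux_retr_sub {ι : Type*} [Fintype ι] (A B : Matrix ι ι ℂ) :
    retr (A - B) = retr A - retr B := by
  simp [retr]

theorem aux_retr_smul {ι : Type*} [Fintype ι] (c : ℝ) (A : Matrix ι ι ℂ) :
    retr (c • A) = c * retr A := by
  simp [retr]

theorem aux_retr_sum {ι κ : Type*} [Fintype ι] (s : Finset κ) (A : κ → Matrix ι ι ℂ) :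
    retr (∑ i ∈ s, A i) = ∑ i ∈ s, retr (A i) := by
  simp [retr, Matrix.trace_sum]

theorem aux_retr_mul_sum_smul {ι κ : Type*} [Fintype ι] [Fintype κ] (τ : Matrix ι ι ℂ)
    (c : κ → ℝ) (A : κ → Matrix ι ι ℂ) :
    retr (τ * ∑ i, c i • A i) = ∑ i, c i * retr (τ * A i) := by
  rw [Finset.mul_sum, aux_retr_sum]
  refine Finset.sum_congr rfl fun i _ => ?_
  rw [Matrix.mul_smul, aux_retr_smul]

open scoped MatrixOrder in
theorem aux_psd_factor {ι : Type*} [Fintype ι] [DecidableEq ι] {A : Matrix ι ι ℂ}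
    (hA : A.PosSemidef) : ∃ C : Matrix ι ι ℂ, A = C * Cᴴ := by
  obtain ⟨B, hB⟩ := CStarAlgebra.nonneg_iff_eq_star_mul_self.mp (nonneg_iff_posSemidef.mpr hA)
  exact ⟨Bᴴ, by simpa [Matrix.star_eq_conjTranspose] using hB⟩

theorem aux_retr_nonneg {ι : Type*} [Fintype ι] {A : Matrix ι ι ℂ}
    (hA : A.PosSemidef) : 0 ≤ retr A := (Complex.nonneg_iff.mp hA.trace_nonneg).1

theorem aux_retr_mul_nonneg {ι : Type*} [Fintype ι] [DecidableEq ι] {A B : Matrix ι ι ℂ}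
    (hA : A.PosSemidef) (hB : B.PosSemidef) : 0 ≤ retr (A * B) := by
  obtain ⟨C, rfl⟩ := aux_psd_factor hB
  have h : retr (A * (C * Cᴴ)) = retr (Cᴴ * A * C) := by
    unfold retr
    rw [← Matrix.mul_assoc, Matrix.trace_mul_comm, Matrix.mul_assoc]
  rw [h]
  exact aux_retr_nonneg (hA.conjTranspose_mul_mul_same C)

theorem aux_supp {ι : Type*} [Fintype ι] [DecidableEq ι] {ρ σ P : Matrix ι ι ℂ}
    (hσ : σ.PosSemidef) (hP : P.PosSemidef)
    (hsupp : ∀ v : ι → ℂ, σ.mulVec v = 0 → ρ.mulVec v = 0)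
    (h0 : retr (σ * P) = 0) : retr (ρ * P) = 0 := by
  obtain ⟨C, rfl⟩ := aux_psd_factor hP
  obtain ⟨S, hS⟩ := aux_psd_factor hσ
  have h : (σ * (C * Cᴴ)).trace = ((Sᴴ * C)ᴴ * (Sᴴ * C)).trace := by
    rw [← Matrix.mul_assoc, Matrix.trace_mul_comm, hS]
    simp [Matrix.mul_assoc]
  have hps := Matrix.posSemidef_conjTranspose_mul_self (Sᴴ * C)
  have h1 : ((Sᴴ * C)ᴴ * (Sᴴ * C)).trace = 0 := by
    have h2 := Complex.nonneg_iff.mp hps.trace_nonneg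
    apply Complex.ext
    · rw [← h]; exact h0
    · exact h2.2.symm
  rw [Matrix.trace_conjTranspose_mul_self_eq_zero_iff] at h1
  have h3 : σ * C = 0 := by rw [hS, Matrix.mul_assoc, h1, Matrix.mul_zero]
  have h4 : ρ * C = 0 := by
    ext i j
    have := hsupp (C.col j) (by
      ext i
      exact congrFun (congrFun h3 i) j)
    exact congrFun this i
  rw [← Matrix.mul_assoc, h4]
  simp [retr]

/-- spectral projections -/
def auxE {ι : Type*} [Fintype ι] [DecidableEq ι] {A : Matrix ι ι ℂ} (hA : A.IsHermitian)
    (j : ι) : Matrix ι ι ℂ :=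
  (hA.eigenvectorUnitary : Matrix ι ι ℂ) * Matrix.diagonal (Pi.single j 1) *
      star (hA.eigenvectorUnitary : Matrix ι ι ℂ)

theorem auxE_sum {ι : Type*} [Fintype ι] [DecidableEq ι] {A : Matrix ι ι ℂ}
    (hA : A.IsHermitian) (d : ι → ℝ) :
    (hA.eigenvectorUnitary : Matrix ι ι ℂ) * Matrix.diagonal (fun i => (d i : ℂ)) *
      star (hA.eigenvectorUnitary : Matrix ι ι ℂ) = ∑ j, d j • auxE hA j := by
  have : Matrix.diagonal (fun i => (d i : ℂ)) =
      ∑ j, d j • Matrix.diagonal (Pi.single j (1:ℂ)) := by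
    ext a b
    by_cases hab : a = b
    · subst hab
      simp [Matrix.sum_apply, Pi.single_apply]
    · simp [Matrix.sum_apply, hab]
  rw [this, Finset.mul_sum, Finset.sum_mul]
  simp [auxE]

theorem auxE_psd {ι : Type*} [Fintype ι] [DecidableEq ι] {A : Matrix ι ι ℂ}
    (hA : A.IsHermitian) (j : ι) : (auxE hA j).PosSemidef := by
  unfold auxE
  rw [Matrix.star_eq_conjTranspose]
  refine Matrix.PosSemidef.mul_mul_conjTranspose_same (Matrix.PosSemidef.diagonal ?_) _
  intro i
  by_cases h : i = j
  · subst h; simp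
  · simp [h]

theorem auxE_one {ι : Type*} [Fintype ι] [DecidableEq ι] {A : Matrix ι ι ℂ}
    (hA : A.IsHermitian) : ∑ j, auxE hA j = 1 := by
  have := auxE_sum hA (fun _ => 1)
  simpa using this.symm

theorem auxE_mul {ι : Type*} [Fintype ι] [DecidableEq ι] {A : Matrix ι ι ℂ}
    (hA : A.IsHermitian) (i j : ι) :
    auxE hA i * auxE hA j = if i = j then auxE hA j else 0 := by
  unfold auxE
  have h : star (hA.eigenvectorUnitary : Matrix ι ι ℂ) *
    (hA.eigenvectorUnitary : Matrix ι ι ℂ) = 1 := by simp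
  set U := (hA.eigenvectorUnitary : Matrix ι ι ℂ)
  have h2 : U * diagonal (Pi.single i 1) * star U * (U * diagonal (Pi.single j 1) * star U)
    = U * (diagonal (Pi.single i 1) * diagonal (Pi.single j 1)) * star U := by
    calc _ = U * diagonal (Pi.single i 1) * (star U * U) * diagonal (Pi.single j 1) * star U := by
          simp only [Matrix.mul_assoc]
      _ = _ := by rw [h]; simp only [Matrix.mul_assoc, Matrix.one_mul]
  rw [h2, Matrix.diagonal_mul_diagonal]
  split_ifs with hij
  · subst hij
    congr 3
    ext a
    by_cases ha : a = i
    · subst ha; simp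
    · simp [ha]
  · have : (fun k => (Pi.single i 1 : ι → ℂ) k * (Pi.single j 1 : ι → ℂ) k) = fun _ => 0 := by
      ext a
      by_cases ha : a = i
      · subst ha; simp [hij]
      · simp [ha]
    rw [this]; simp

theorem auxE_trace {ι : Type*} [Fintype ι] [DecidableEq ι] {A : Matrix ι ι ℂ}
    (hA : A.IsHermitian) (j : ι) : retr (auxE hA j) = 1 := by
  unfold auxE retr
  rw [Matrix.trace_mul_comm, ← Matrix.mul_assoc]
  simp [Matrix.trace_diagonal]

theorem auxE_spec {ι : Type*} [Fintype ι] [DecidableEq ι] {A : Matrix ι ι ℂ}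
    (hA : A.IsHermitian) : A = ∑ j, hA.eigenvalues j • auxE hA j := by
  rw [← auxE_sum]
  conv_lhs => rw [hA.spectral_theorem]
  rfl

theorem aux_rpowH {ι : Type*} [Fintype ι] [DecidableEq ι] {A : Matrix ι ι ℂ}
    (hA : A.IsHermitian) (p : ℝ) :
    Matrix.rpowH A p = ∑ j, (hA.eigenvalues j ^ p) • auxE hA j := by
  rw [← auxE_sum, Matrix.rpowH, dif_pos hA]

theorem aux_rpowH_cfc {ι : Type*} [Fintype ι] [DecidableEq ι] {A : Matrix ι ι ℂ}
    (hA : A.IsHermitian) (p : ℝ) :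
    Matrix.rpowH A p = cfc (fun x : ℝ => x ^ p) A := by
  rw [hA.cfc_eq, Matrix.rpowH, dif_pos hA]
  rfl

theorem aux_rpowH_rpowH {ι : Type*} [Fintype ι] [DecidableEq ι] {A : Matrix ι ι ℂ}
    (hA : A.PosDef) (p q : ℝ) (hpq : p * q = 1) (hB : (Matrix.rpowH A p).IsHermitian) :
    Matrix.rpowH (Matrix.rpowH A p) q = A := by
  rw [aux_rpowH_cfc hB, aux_rpowH_cfc hA.1]
  have hfin : (spectrum ℝ A).Finite := Matrix.finite_real_spectrum
  refine (cfc_comp' (fun x : ℝ => x ^ q) (fun x : ℝ => x ^ p) A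
    ((hfin.image _).continuousOn _) (hfin.continuousOn _) hA.1).symm.trans ?_
  refine Eq.trans ?_ (cfc_id' ℝ A hA.1)
  refine cfc_congr fun x hx => ?_
  rw [hA.1.spectrum_real_eq_range_eigenvalues] at hx
  obtain ⟨i, rfl⟩ := hx
  show ((hA.1.eigenvalues i) ^ p) ^ q = _
  rw [← Real.rpow_mul (hA.eigenvalues_pos i).le, hpq, Real.rpow_one]

theorem aux_posDef_sum {ι : Type*} [Fintype ι] [DecidableEq ι] {A : Matrix ι ι ℂ}
    (hA : A.IsHermitian) (d : ι → ℝ) (hd : ∀ j, 0 < d j) :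
    (∑ j, d j • auxE hA j).PosDef := by
  rw [← auxE_sum]
  rw [Matrix.IsUnit.posDef_star_right_conjugate_iff]
  · exact Matrix.PosDef.diagonal fun i => by simpa using hd i
  · exact (Unitary.toUnits hA.eigenvectorUnitary).isUnit

theorem aux_eig_ge_one {ι : Type*} [Fintype ι] [DecidableEq ι] {A : Matrix ι ι ℂ}
    (hA : A.IsHermitian) (h1 : (A - 1).PosSemidef) (j : ι) : 1 ≤ hA.eigenvalues j := by
  have h := aux_retr_mul_nonneg h1 (auxE_psd hA j)
  rw [Matrix.sub_mul, aux_retr_sub, Matrix.one_mul, auxE_trace] at h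
  have h2 : A * auxE hA j = hA.eigenvalues j • auxE hA j := by
    have h3 := congrArg (fun X => X * auxE hA j) (auxE_spec hA)
    refine h3.trans ?_
    simp only [Finset.sum_mul]
    simp [auxE_mul]
  rw [h2, aux_retr_smul, auxE_trace] at h
  linarith

theorem aux_rpow_pos {ι : Type*} [Fintype ι] [DecidableEq ι] {A τ : Matrix ι ι ℂ}
    (hA : A.IsHermitian) (hτ : τ.PosSemidef) (hτ1 : τ.trace = 1) (d : ι → ℝ)
    (hd : ∀ j, 0 < d j) : 0 < retr (τ * ∑ j, d j • auxE hA j) := by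
  rw [aux_retr_mul_sum_smul]
  have hn : ∀ j, 0 ≤ retr (τ * auxE hA j) := fun j => aux_retr_mul_nonneg hτ (auxE_psd hA j)
  have hs : ∑ j, retr (τ * auxE hA j) = 1 := by
    rw [← aux_retr_sum, ← Finset.mul_sum, auxE_one, Matrix.mul_one]
    simp [retr, hτ1]
  by_contra hcon
  have h0 : ∑ j, d j * retr (τ * auxE hA j) = 0 :=
    le_antisymm (not_lt.mp hcon) (Finset.sum_nonneg fun j _ => mul_nonneg (hd j).le (hn j))
  rw [Finset.sum_eq_zero_iff_of_nonneg (fun j _ => mul_nonneg (hd j).le (hn j))] at h0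
  have : ∑ j, retr (τ * auxE hA j) = 0 := Finset.sum_eq_zero fun j hj => by
    have := h0 j hj
    rcases mul_eq_zero.mp this with h | h
    · exact absurd h (hd j).ne'
    · exact h
  linarith

theorem aux_psd_sum {ι κ : Type*} [Fintype ι] [DecidableEq ι] [Fintype κ]
    (P : κ → Matrix ι ι ℂ) (hP : ∀ i, (P i).PosSemidef) (c : κ → ℝ) (hc : ∀ i, 0 ≤ c i) :
    (∑ i, c i • P i).PosSemidef :=
  Matrix.posSemidef_sum _ fun i _ => (hP i).smul (hc i)

theorem aux_posDef_povm {ι κ : Type*} [Fintype ι] [DecidableEq ι] [Fintype κ]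
    (P : κ → Matrix ι ι ℂ) (hP : ∀ i, (P i).PosSemidef) (hP1 : ∑ i, P i = 1)
    (c : κ → ℝ) (hc : ∀ i, 0 < c i) :
    (∑ i, c i • P i).PosDef := by
  obtain ⟨m, hm, hmc⟩ : ∃ m : ℝ, 0 < m ∧ ∀ i, m ≤ c i := by
    rcases isEmpty_or_nonempty κ with h | h
    · exact ⟨1, one_pos, fun i => h.elim i⟩
    · obtain ⟨i, hi⟩ := Finite.exists_min c
      exact ⟨c i, hc i, hi⟩
  have : ∑ i, c i • P i = m • (1 : Matrix ι ι ℂ) + ∑ i, (c i - m) • P i := by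
    rw [← hP1, Finset.smul_sum, ← Finset.sum_add_distrib]
    refine Finset.sum_congr rfl fun i _ => ?_
    rw [← add_smul]; congr 1; ring
  rw [this]
  exact (Matrix.PosDef.one.smul hm).add_posSemidef
    (aux_psd_sum P hP _ fun i => sub_nonneg.mpr (hmc i))

/-- operator Jensen for the inverse -/
theorem aux_inv_jensen {ι κ : Type*} [Fintype ι] [DecidableEq ι] [Fintype κ]
    (P : κ → Matrix ι ι ℂ) (hP : ∀ i, (P i).PosSemidef)
    (c : κ → ℝ) (hc : ∀ i, 0 < c i) (hP1 : ∑ i, P i = 1) (B : Matrix ι ι ℂ)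
    (hB : B.IsHermitian) (hBA : B * ∑ i, c i • P i = 1) :
    ((∑ i, (c i)⁻¹ • P i) - B).PosSemidef := by
  have h : (∑ i, (c i)⁻¹ • P i) - B =
      ∑ i, c i • (((c i)⁻¹ • (1 : Matrix ι ι ℂ) - B) * P i * ((c i)⁻¹ • (1 : Matrix ι ι ℂ) - B)ᴴ) := by
    have e : ∀ i, c i • (((c i)⁻¹ • (1 : Matrix ι ι ℂ) - B) * P i *
        ((c i)⁻¹ • (1 : Matrix ι ι ℂ) - B)ᴴ) =
        (c i)⁻¹ • P i - B * P i - P i * B + B * (c i • P i) * B := by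
      intro i
      have hci := (hc i).ne'
      have hB' : Bᴴ = B := hB
      simp only [Matrix.conjTranspose_sub, Matrix.conjTranspose_smul, hB',
        Matrix.conjTranspose_one, Matrix.sub_mul, Matrix.mul_sub, Matrix.smul_mul,
        Matrix.mul_smul, Matrix.one_mul, Matrix.mul_one, smul_sub, smul_smul, star_trivial]
      rw [← mul_assoc, mul_inv_cancel₀ hci]
      simp only [one_smul, one_mul]
      abel
    rw [Finset.sum_congr rfl fun i _ => e i]
    rw [Finset.sum_add_distrib, Finset.sum_sub_distrib, Finset.sum_sub_distrib,
      ← Finset.mul_sum, ← Finset.sum_mul, ← Finset.sum_mul, ← Finset.mul_sum, hP1, hBA]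
    simp
  rw [h]
  exact Matrix.posSemidef_sum _ fun i _ =>
    ((hP i).mul_mul_conjTranspose_same _).smul (hc i).le

theorem aux_integral (r : ℝ) (hr1 : -1 < r) (hr0 : r < 0) (x : ℝ) (hx : 0 < x) :
    MeasureTheory.IntegrableOn (fun t : ℝ => t ^ r * (t + x)⁻¹) (Set.Ioi 0) ∧
    ∫ t in Set.Ioi (0:ℝ), t ^ r * (t + x)⁻¹ =
      x ^ r * ∫ t in Set.Ioi (0:ℝ), Real.rpowIntegrand₀₁ (r + 1) t 1 := by
  have hp : r + 1 ∈ Set.Ioo (0:ℝ) 1 := ⟨by linarith, by linarith⟩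
  have heq : Set.EqOn (fun t : ℝ => x⁻¹ * Real.rpowIntegrand₀₁ (r + 1) t x)
      (fun t : ℝ => t ^ r * (t + x)⁻¹) (Set.Ioi 0) := by
    intro t ht
    have ht' : 0 < t := ht
    simp only
    rw [Real.rpowIntegrand₀₁_eq_pow_div hp ht'.le hx.le, add_sub_cancel_right]
    field_simp
  constructor
  · exact MeasureTheory.IntegrableOn.congr_fun
      ((Real.integrableOn_rpowIntegrand₀₁_Ioi hp hx.le).const_mul x⁻¹) heq measurableSet_Ioi
  · rw [← MeasureTheory.setIntegral_congr_fun measurableSet_Ioi heq,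
      MeasureTheory.integral_const_mul, Real.integral_rpowIntegrand₀₁_eq_rpow_mul_const hp hx.le,
      Real.rpow_add_one hx.ne']
    field_simp

theorem aux_key (r : ℝ) (hr1 : -1 < r) (hr0 : r < 0) {κ : Type*} [Fintype κ] (a x : κ → ℝ)
    (hx : ∀ j, 0 < x j) :
    MeasureTheory.IntegrableOn (fun t : ℝ => t ^ r * ∑ j, a j * (t + x j)⁻¹) (Set.Ioi 0) ∧
    ∫ t in Set.Ioi (0:ℝ), t ^ r * ∑ j, a j * (t + x j)⁻¹ = (∑ j, a j * x j ^ r) *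
      ∫ t in Set.Ioi (0:ℝ), Real.rpowIntegrand₀₁ (r + 1) t 1 := by
  have e : (fun t : ℝ => t ^ r * ∑ j, a j * (t + x j)⁻¹) =
      fun t : ℝ => ∑ j, a j * (t ^ r * (t + x j)⁻¹) := by
    ext t
    rw [Finset.mul_sum]
    exact Finset.sum_congr rfl fun j _ => by ring
  have hi : ∀ j, MeasureTheory.IntegrableOn (fun t : ℝ => a j * (t ^ r * (t + x j)⁻¹))
      (Set.Ioi 0) := fun j => (aux_integral r hr1 hr0 (x j) (hx j)).1.const_mul _
  rw [e]
  constructor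
  · exact MeasureTheory.integrable_finsetSum _ fun j _ => hi j
  · rw [MeasureTheory.integral_finsetSum _ fun j _ => hi j, Finset.sum_mul]
    refine Finset.sum_congr rfl fun j _ => ?_
    rw [MeasureTheory.integral_const_mul, (aux_integral r hr1 hr0 (x j) (hx j)).2, mul_assoc]

theorem aux_scalar {κ₁ κ₂ : Type*} [Fintype κ₁] [Fintype κ₂] (a x : κ₁ → ℝ) (b y : κ₂ → ℝ)
    (hx : ∀ j, 0 < x j) (hy : ∀ i, 0 < y i)
    (h : ∀ s : ℝ, 0 ≤ s → ∑ j, a j * (s + x j)⁻¹ ≤ ∑ i, b i * (s + y i)⁻¹)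
    (r : ℝ) (hr1 : -1 ≤ r) (hr0 : r < 0) :
    ∑ j, a j * x j ^ r ≤ ∑ i, b i * y i ^ r := by
  rcases hr1.eq_or_lt with rfl | hr1
  · have := h 0 le_rfl
    simpa [Real.rpow_neg_one] using this
  set K := ∫ t in Set.Ioi (0:ℝ), Real.rpowIntegrand₀₁ (r + 1) t 1 with hK
  have hKpos : 0 < K := by
    have := Real.le_integral_rpowIntegrand₀₁_one (p := r + 1) ⟨by linarith, by linarith⟩
    refine lt_of_lt_of_le ?_ this
    exact div_pos_of_neg_of_neg (by norm_num) (by linarith)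
  have h1 := aux_key r hr1 hr0 a x hx
  have h2 := aux_key r hr1 hr0 b y hy
  refine le_of_mul_le_mul_right ?_ hKpos
  rw [← h1.2, ← h2.2]
  refine MeasureTheory.setIntegral_mono_on h1.1 h2.1 measurableSet_Ioi fun t ht => ?_
  have ht' : 0 < t := ht
  exact mul_le_mul_of_nonneg_left (h t ht'.le) (Real.rpow_nonneg ht'.le _)

/-- trace form of the operator Jensen inequality for the powers in `[-1,0)` -/
theorem aux_jensen {ι κ : Type*} [Fintype ι] [DecidableEq ι] [Fintype κ]
    (P : κ → Matrix ι ι ℂ) (hP : ∀ i, (P i).PosSemidef) (hP1 : ∑ i, P i = 1)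
    (c : κ → ℝ) (hc : ∀ i, 0 < c i) (τ : Matrix ι ι ℂ) (hτ : τ.PosSemidef)
    (r : ℝ) (hr1 : -1 ≤ r) (hr0 : r < 0) :
    retr (τ * Matrix.rpowH (∑ i, c i • P i) r) ≤ ∑ i, c i ^ r * retr (τ * P i) := by
  have hA := aux_posDef_povm P hP hP1 c hc
  set A := ∑ i, c i • P i with hAdef
  rw [aux_rpowH hA.1, aux_retr_mul_sum_smul]
  have hpos := hA.eigenvalues_pos
  have := aux_scalar (fun j => retr (τ * auxE hA.1 j)) hA.1.eigenvalues
    (fun i => retr (τ * P i)) c hpos hc (fun s hs => ?_) r hr1 hr0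
  · simpa only [mul_comm] using this
  have hsx : ∀ j, 0 < s + hA.1.eigenvalues j := fun j => add_pos_of_nonneg_of_pos hs (hpos j)
  have hB := aux_posDef_sum hA.1 (fun j => (s + hA.1.eigenvalues j)⁻¹) fun j => inv_pos.mpr (hsx j)
  have hsum : ∑ i, (s + c i) • P i = ∑ j, (s + hA.1.eigenvalues j) • auxE hA.1 j := by
    simp only [add_smul, Finset.sum_add_distrib, ← Finset.smul_sum, hP1, auxE_one]
    rw [← hAdef, ← auxE_spec hA.1]
  have hBA : (∑ j, (s + hA.1.eigenvalues j)⁻¹ • auxE hA.1 j) * ∑ i, (s + c i) • P i = 1 := by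
    rw [hsum, Finset.sum_mul, ← auxE_one hA.1]
    refine Finset.sum_congr rfl fun j _ => ?_
    rw [Finset.mul_sum]
    simp only [Matrix.smul_mul, Matrix.mul_smul, auxE_mul]
    simp [smul_smul, mul_inv_cancel₀ (hsx j).ne']
  have hJ := aux_retr_mul_nonneg hτ (aux_inv_jensen P hP (fun i => s + c i)
    (fun i => add_pos_of_nonneg_of_pos hs (hc i)) hP1 _ hB.1 hBA)
  rw [Matrix.mul_sub, aux_retr_sub, aux_retr_mul_sum_smul, aux_retr_mul_sum_smul] at hJ
  simp only [mul_comm (retr _)]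
  linarith

theorem aux_holder {κ : Type*} [Fintype κ] (f g : κ → ℝ) (hf : ∀ i, 0 ≤ f i) (hg : ∀ i, 0 ≤ g i)
    (α : ℝ) (hα0 : 0 < α) (hα1 : α < 1) :
    ∑ i, f i ^ α * g i ^ (1 - α) ≤ (∑ i, f i) ^ α * (∑ i, g i) ^ (1 - α) := by
  have hpq : Real.HolderConjugate α⁻¹ (1 - α)⁻¹ := by
    refine Real.holderConjugate_iff.mpr ⟨(one_lt_inv₀ hα0).mpr hα1, by simp⟩
  have := Real.inner_le_Lp_mul_Lq_of_nonneg Finset.univ hpq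
    (f := fun i => f i ^ α) (g := fun i => g i ^ (1 - α))
    (fun i _ => Real.rpow_nonneg (hf i) _) (fun i _ => Real.rpow_nonneg (hg i) _)
  have e1 : ∀ i, (f i ^ α) ^ α⁻¹ = f i := fun i => Real.rpow_rpow_inv (hf i) hα0.ne'
  have e2 : ∀ i, (g i ^ (1 - α)) ^ (1 - α)⁻¹ = g i :=
    fun i => Real.rpow_rpow_inv (hg i) (by linarith)
  simpa only [e1, e2, one_div, inv_inv] using this

theorem aux_S_pos {κ : Type*} [Fintype κ] (p q : κ → ℝ) (hp : ∀ i, 0 ≤ p i) (hq : ∀ i, 0 ≤ q i)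
    (hp1 : ∑ i, p i = 1) (hpq : ∀ i, q i = 0 → p i = 0) (α : ℝ) :
    0 < ∑ i, p i ^ α * q i ^ (1 - α) := by
  obtain ⟨i, -, hi⟩ : ∃ i ∈ Finset.univ, p i ≠ 0 :=
    Finset.exists_ne_zero_of_sum_ne_zero (by rw [hp1]; exact one_ne_zero)
  have hqi : q i ≠ 0 := fun h => hi (hpq i h)
  refine Finset.sum_pos' (fun j _ => mul_nonneg (Real.rpow_nonneg (hp j) _)
    (Real.rpow_nonneg (hq j) _)) ⟨i, Finset.mem_univ i, ?_⟩
  exact mul_pos (Real.rpow_pos_of_pos (lt_of_le_of_ne (hp i) hi.symm) _)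
    (Real.rpow_pos_of_pos (lt_of_le_of_ne (hq i) hqi.symm) _)

/-- For each positive test vector there is an admissible operator doing at least as well. -/
theorem aux_exists_T {ι κ : Type*} [Fintype ι] [DecidableEq ι] [Fintype κ]
    (ρ σ : Matrix ι ι ℂ) (hρ : ρ.PosSemidef) (hρtr : ρ.trace = 1)
    (hσ : σ.PosSemidef) (hσtr : σ.trace = 1)
    (P : κ → Matrix ι ι ℂ) (hP : ∀ i, (P i).PosSemidef) (hP1 : ∑ i, P i = 1)
    (β : ℝ) (hβ : β < 0) (c : κ → ℝ) (hc : ∀ i, 0 < c i) (hc1 : ∀ i, c i ≤ 1) :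
    ∃ T : Matrix ι ι ℂ, (T.PosDef ∧ (1 - T).PosSemidef) ∧
      β * Real.log (∑ i, c i * retr (ρ * P i)) - Real.log (∑ i, c i ^ β * retr (σ * P i)) ≤
      β * Real.log (retr (ρ * T)) - Real.log (retr (σ * Matrix.rpowH T β)) := by
  have hpos : ∀ (T : Matrix ι ι ℂ), T.PosDef → 0 < retr (ρ * T) ∧
      0 < retr (σ * Matrix.rpowH T β) := by
    intro T hT
    constructor
    · have h := aux_rpow_pos hT.1 hρ hρtr hT.1.eigenvalues hT.eigenvalues_pos
      rwa [← auxE_spec hT.1] at h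
    · rw [aux_rpowH hT.1]
      exact aux_rpow_pos hT.1 hσ hσtr _ fun j => Real.rpow_pos_of_pos (hT.eigenvalues_pos j) _
  suffices hs : ∃ T : Matrix ι ι ℂ, (T.PosDef ∧ (1 - T).PosSemidef) ∧
      retr (ρ * T) ≤ ∑ i, c i * retr (ρ * P i) ∧
      retr (σ * Matrix.rpowH T β) ≤ ∑ i, c i ^ β * retr (σ * P i) by
    obtain ⟨T, hT, h1, h2⟩ := hs
    refine ⟨T, hT, ?_⟩
    have h3 := Real.log_le_log (hpos T hT.1).1 h1
    have h4 := Real.log_le_log (hpos T hT.1).2 h2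
    have h5 := mul_le_mul_of_nonpos_left h3 hβ.le
    linarith
  rcases le_or_gt (-1) β with hb | hb
  · refine ⟨∑ i, c i • P i, ⟨aux_posDef_povm P hP hP1 c hc, ?_⟩, ?_, ?_⟩
    · have : 1 - ∑ i, c i • P i = ∑ i, (1 - c i) • P i := by
        simp only [sub_smul, Finset.sum_sub_distrib, one_smul, hP1]
      rw [this]
      exact aux_psd_sum P hP _ fun i => sub_nonneg.mpr (hc1 i)
    · rw [aux_retr_mul_sum_smul]
    · exact aux_jensen P hP hP1 c hc σ hσ β hb hβ
  · have hcb : ∀ i, 0 < c i ^ β := fun i => Real.rpow_pos_of_pos (hc i) _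
    have hW := aux_posDef_povm P hP hP1 (fun i => c i ^ β) hcb
    have hJ := aux_jensen P hP hP1 (fun i => c i ^ β) hcb ρ hρ β⁻¹
      (by rw [← neg_le_neg_iff, ← inv_neg, neg_neg]
          exact inv_le_one_of_one_le₀ (by linarith)) (inv_lt_zero.mpr hβ)
    have hW1 : ((∑ i, (c i ^ β) • P i) - 1).PosSemidef := by
      have : (∑ i, (c i ^ β) • P i) - 1 = ∑ i, (c i ^ β - 1) • P i := by
        simp only [sub_smul, Finset.sum_sub_distrib, one_smul, hP1]
      rw [this]
      exact aux_psd_sum P hP _ fun i => sub_nonneg.mpr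
        (Real.one_le_rpow_of_pos_of_le_one_of_nonpos (hc i) (hc1 i) hβ.le)
    set W := ∑ i, (c i ^ β) • P i with hWdef
    have hTpd : (Matrix.rpowH W β⁻¹).PosDef := by
      rw [aux_rpowH hW.1]
      exact aux_posDef_sum hW.1 _ fun j => Real.rpow_pos_of_pos (hW.eigenvalues_pos j) _
    refine ⟨Matrix.rpowH W β⁻¹, ⟨hTpd, ?_⟩, ?_, ?_⟩
    · rw [aux_rpowH hW.1]
      have : 1 - ∑ j, (hW.1.eigenvalues j ^ β⁻¹) • auxE hW.1 j =
          ∑ j, (1 - hW.1.eigenvalues j ^ β⁻¹) • auxE hW.1 j := by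
        simp only [sub_smul, Finset.sum_sub_distrib, one_smul, auxE_one]
      rw [this]
      exact aux_psd_sum _ (auxE_psd hW.1) _ fun j => sub_nonneg.mpr
        (Real.rpow_le_one_of_one_le_of_nonpos (aux_eig_ge_one hW.1 hW1 j) (inv_lt_zero.mpr hβ).le)
    · refine hJ.trans (le_of_eq (Finset.sum_congr rfl fun i _ => ?_))
      rw [Real.rpow_rpow_inv (hc i).le hβ.ne]
    · rw [aux_rpowH_rpowH hW _ _ (inv_mul_cancel₀ hβ.ne) hTpd.1, hWdef, aux_retr_mul_sum_smul]

theorem aux_exists_T' {ι κ : Type*} [Fintype ι] [DecidableEq ι] [Fintype κ]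
    (ρ σ : Matrix ι ι ℂ) (hρ : ρ.PosSemidef) (hρtr : ρ.trace = 1)
    (hσ : σ.PosSemidef) (hσtr : σ.trace = 1)
    (P : κ → Matrix ι ι ℂ) (hP : ∀ i, (P i).PosSemidef) (hP1 : ∑ i, P i = 1)
    (β : ℝ) (hβ : β < 0) (c : κ → ℝ) (hc : ∀ i, 0 < c i)
    (h1 : 0 < ∑ i, c i * retr (ρ * P i)) (h2 : 0 < ∑ i, c i ^ β * retr (σ * P i)) :
    ∃ T : Matrix ι ι ℂ, (T.PosDef ∧ (1 - T).PosSemidef) ∧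
      β * Real.log (∑ i, c i * retr (ρ * P i)) - Real.log (∑ i, c i ^ β * retr (σ * P i)) ≤
      β * Real.log (retr (ρ * T)) - Real.log (retr (σ * Matrix.rpowH T β)) := by
  obtain ⟨M, hM, hcM⟩ : ∃ M : ℝ, 0 < M ∧ ∀ i, M * c i ≤ 1 := by
    rcases isEmpty_or_nonempty κ with h | h
    · exact ⟨1, one_pos, fun i => h.elim i⟩
    · obtain ⟨i, hi⟩ := Finite.exists_max c
      refine ⟨(c i)⁻¹, inv_pos.mpr (hc i), fun j => ?_⟩
      rw [inv_mul_le_iff₀ (hc i), mul_one]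
      exact hi j
  obtain ⟨T, hT, h⟩ := aux_exists_T ρ σ hρ hρtr hσ hσtr P hP hP1 β hβ (fun i => M * c i)
    (fun i => mul_pos hM (hc i)) hcM
  refine ⟨T, hT, le_trans (le_of_eq ?_) h⟩
  have e1 : ∑ i, M * c i * retr (ρ * P i) = M * ∑ i, c i * retr (ρ * P i) := by
    rw [Finset.mul_sum]; exact Finset.sum_congr rfl fun i _ => by ring
  have e2 : ∑ i, (M * c i) ^ β * retr (σ * P i) = M ^ β * ∑ i, c i ^ β * retr (σ * P i) := by
    rw [Finset.mul_sum]
    exact Finset.sum_congr rfl fun i _ => by rw [Real.mul_rpow hM.le (hc i).le]; ring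
  simp only [e1, e2]
  rw [Real.log_mul hM.ne' h1.ne', Real.log_mul (Real.rpow_pos_of_pos hM _).ne' h2.ne',
    Real.log_rpow hM]
  ring

/-- variational expression for the measured Rényi divergence, `α ∈ (0,1)`.
`D_α^𝕄(ρ‖σ) = sup { (α/(α-1)) log Tr[ρT] - log Tr[σ T^{α/(α-1)}] : 0 < T ≤ 𝟙 }`,
where `T^{α/(α-1)}` is a negative power of the positive definite `T`. -/
theorem measured_renyi_variational_lt_one
    {ι : Type*} [Fintype ι] [DecidableEq ι]
    (ρ σ : Matrix ι ι ℂ)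
    (hρ : ρ.PosSemidef) (hρtr : ρ.trace = 1)
    (hσ : σ.PosSemidef) (hσtr : σ.trace = 1)
    (hsupp : ∀ v : ι → ℂ, σ.mulVec v = 0 → ρ.mulVec v = 0)
    (α : ℝ) (hα0 : 0 < α) (hα1 : α < 1) :
    measuredRenyiDiv α ρ σ =
      ⨆ (T : Matrix ι ι ℂ) (_ : T.PosDef ∧ (1 - T).PosSemidef),
        ((α / (α - 1) * Real.log (retr (ρ * T))
          - Real.log (retr (σ * Matrix.rpowH T (α / (α - 1)))) : ℝ) : EReal) := by
  have hβ : α / (α - 1) < 0 := div_neg_of_pos_of_neg hα0 (by linarith)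
  have hα1' : α - 1 ≠ 0 := by linarith
  set β := α / (α - 1) with hβdef
  have hβα : β * (1 - α) = -α := by rw [hβdef]; field_simp; ring
  have hβ1 : β - 1 = (α - 1)⁻¹ := by rw [hβdef]; field_simp; ring
  have hfacts : ∀ (k : ℕ) (P : Fin k → Matrix ι ι ℂ), (∀ i, (P i).PosSemidef) → ∑ i, P i = 1 →
      (∀ i, 0 ≤ retr (ρ * P i)) ∧ (∀ i, 0 ≤ retr (σ * P i)) ∧
      (∀ i, retr (σ * P i) = 0 → retr (ρ * P i) = 0) ∧ ∑ i, retr (ρ * P i) = 1 := by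
    intro k P hP hP1
    refine ⟨fun i => aux_retr_mul_nonneg hρ (hP i), fun i => aux_retr_mul_nonneg hσ (hP i),
      fun i h => aux_supp hσ (hP i) hsupp h, ?_⟩
    rw [← aux_retr_sum, ← Finset.mul_sum, hP1, Matrix.mul_one]
    simp [retr, hρtr]
  apply le_antisymm
  · unfold measuredRenyiDiv
    refine iSup_le fun k => iSup_le fun P => iSup_le fun hP => iSup_le fun hP1 => ?_
    obtain ⟨hp, hq, hpq, hp1⟩ := hfacts k P hP hP1
    unfold renyiDivE
    rw [if_pos (Or.inl hα1)]
    set p : Fin k → ℝ := fun i => retr (ρ * P i) with hpdef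
    set q : Fin k → ℝ := fun i => retr (σ * P i) with hqdef
    have hS := aux_S_pos p q hp hq hp1 hpq α
    set S := ∑ i, p i ^ α * q i ^ (1 - α) with hSdef
    set Q := ∑ i, (if p i = 0 then q i else 0) with hQdef
    have hQ : 0 ≤ Q := Finset.sum_nonneg fun i _ => by
      split_ifs
      · exact hq i
      · exact le_rfl
    have hlim : Filter.Tendsto (fun M : ℝ => β * Real.log S - Real.log (S + M ^ β * Q))
        Filter.atTop (nhds ((α - 1)⁻¹ * Real.log S)) := by
      have h0 : Filter.Tendsto (fun M : ℝ => M ^ β) Filter.atTop (nhds 0) := by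
        have := tendsto_rpow_neg_atTop (neg_pos.mpr hβ)
        simpa using this
      have h1 : Filter.Tendsto (fun M : ℝ => S + M ^ β * Q) Filter.atTop (nhds S) := by
        simpa using (h0.mul_const Q).const_add S
      have h2 := (h1.log hS.ne').const_sub (β * Real.log S)
      have e : (α - 1)⁻¹ * Real.log S = β * Real.log S - Real.log S := by rw [← hβ1]; ring
      rw [e]; exact h2
    refine le_of_tendsto ((continuous_coe_real_ereal.tendsto _).comp hlim) ?_
    filter_upwards [Filter.eventually_gt_atTop 0] with M hM
    have hpp : ∀ i, p i ≠ 0 → 0 < p i := fun i h => lt_of_le_of_ne (hp i) h.symm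
    have hqq : ∀ i, p i ≠ 0 → 0 < q i := fun i h =>
      lt_of_le_of_ne (hq i) fun h' => h (hpq i h'.symm)
    set c : Fin k → ℝ := fun i => if p i = 0 then M else (q i / p i) ^ (1 - α) with hcdef
    have hc : ∀ i, 0 < c i := by
      intro i
      simp only [hcdef]
      split_ifs with h
      · exact hM
      · exact Real.rpow_pos_of_pos (div_pos (hqq i h) (hpp i h)) _
    have e1 : ∑ i, c i * p i = S := by
      refine Finset.sum_congr rfl fun i _ => ?_
      simp only [hcdef]
      split_ifs with h
      · rw [h, Real.zero_rpow hα0.ne']; ring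
      · rw [Real.div_rpow (hq i) (hp i)]
        have : p i ^ α = p i / p i ^ (1 - α) := by
          rw [eq_div_iff (Real.rpow_pos_of_pos (hpp i h) _).ne', ← Real.rpow_add (hpp i h)]
          simp
        rw [this]; ring
    have e2 : ∑ i, c i ^ β * q i = S + M ^ β * Q := by
      rw [hSdef, hQdef, Finset.mul_sum, ← Finset.sum_add_distrib]
      refine Finset.sum_congr rfl fun i _ => ?_
      simp only [hcdef]
      split_ifs with h
      · rw [h, Real.zero_rpow hα0.ne']; ring
      · rw [← Real.rpow_mul (div_pos (hqq i h) (hpp i h)).le, mul_comm (1 - α), hβα,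
          Real.rpow_neg (div_pos (hqq i h) (hpp i h)).le, Real.div_rpow (hq i) (hp i),
          Real.rpow_sub (hqq i h), Real.rpow_one, inv_div]
        ring
    have hS2 : 0 < S + M ^ β * Q :=
      add_pos_of_pos_of_nonneg hS (mul_nonneg (Real.rpow_pos_of_pos hM _).le hQ)
    obtain ⟨T, hT, hle⟩ := aux_exists_T' ρ σ hρ hρtr hσ hσtr P hP hP1 β hβ c hc
      (by rw [show ∑ i, c i * retr (ρ * P i) = S from e1]; exact hS)
      (by rw [show ∑ i, c i ^ β * retr (σ * P i) = _ from e2]; exact hS2)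
    rw [show ∑ i, c i * retr (ρ * P i) = S from e1,
      show ∑ i, c i ^ β * retr (σ * P i) = _ from e2] at hle
    refine le_iSup₂_of_le T hT ?_
    exact EReal.coe_le_coe_iff.mpr hle
  · refine iSup₂_le fun T hT => ?_
    have hH := hT.1.1
    set e := Fintype.equivFin ι
    set P : Fin (Fintype.card ι) → Matrix ι ι ℂ := fun i => auxE hH (e.symm i) with hPdef
    have hP : ∀ i, (P i).PosSemidef := fun i => auxE_psd hH _
    have hP1 : ∑ i, P i = 1 := by
      rw [← auxE_one hH]
      exact e.symm.sum_comp (auxE hH)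
    unfold measuredRenyiDiv
    refine le_trans ?_ (le_iSup_of_le _ (le_iSup_of_le P (le_iSup_of_le hP
      (le_iSup_of_le hP1 le_rfl))))
    obtain ⟨hp, hq, hpq, hp1⟩ := hfacts _ P hP hP1
    unfold renyiDivE
    rw [if_pos (Or.inl hα1), EReal.coe_le_coe_iff]
    have hS := aux_S_pos _ _ hp hq hp1 hpq α
    set x : Fin (Fintype.card ι) → ℝ := fun i => hH.eigenvalues (e.symm i) with hxdef
    have hx : ∀ i, 0 < x i := fun i => hT.1.eigenvalues_pos _
    have e1 : retr (ρ * T) = ∑ i, x i * retr (ρ * P i) := by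
      have h : retr (ρ * T) = retr (ρ * ∑ j, hH.eigenvalues j • auxE hH j) := by
        rw [← auxE_spec hH]
      rw [h, aux_retr_mul_sum_smul]
      exact (e.symm.sum_comp (fun j => hH.eigenvalues j * retr (ρ * auxE hH j))).symm
    have e2 : retr (σ * Matrix.rpowH T β) = ∑ i, x i ^ β * retr (σ * P i) := by
      rw [aux_rpowH hH, aux_retr_mul_sum_smul]
      exact (e.symm.sum_comp (fun j => hH.eigenvalues j ^ β * retr (σ * auxE hH j))).symm
    have hpos1 : 0 < retr (ρ * T) := by
      have h := aux_rpow_pos hH hρ hρtr hH.eigenvalues hT.1.eigenvalues_pos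
      rwa [← auxE_spec hH] at h
    have hpos2 : 0 < retr (σ * Matrix.rpowH T β) := by
      rw [aux_rpowH hH]
      exact aux_rpow_pos hH hσ hσtr _ fun j => Real.rpow_pos_of_pos (hT.1.eigenvalues_pos j) _
    have hH1 := aux_holder (fun i => x i * retr (ρ * P i)) (fun i => x i ^ β * retr (σ * P i))
      (fun i => mul_nonneg (hx i).le (hp i))
      (fun i => mul_nonneg (Real.rpow_pos_of_pos (hx i) _).le (hq i)) α hα0 hα1
    rw [← e1, ← e2] at hH1
    have e3 : ∑ i, (x i * retr (ρ * P i)) ^ α * (x i ^ β * retr (σ * P i)) ^ (1 - α) =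
        ∑ i, retr (ρ * P i) ^ α * retr (σ * P i) ^ (1 - α) := by
      refine Finset.sum_congr rfl fun i _ => ?_
      rw [Real.mul_rpow (hx i).le (hp i), Real.mul_rpow (Real.rpow_pos_of_pos (hx i) _).le (hq i),
        ← Real.rpow_mul (hx i).le, hβα, Real.rpow_neg (hx i).le]
      have := (Real.rpow_pos_of_pos (hx i) α).ne'
      field_simp
    rw [e3] at hH1
    have h4 := Real.log_le_log hS hH1
    rw [Real.log_mul (Real.rpow_pos_of_pos hpos1 _).ne' (Real.rpow_pos_of_pos hpos2 _).ne',
      Real.log_rpow hpos1, Real.log_rpow hpos2] at h4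
    have h5 := mul_le_mul_of_nonpos_left h4 (inv_lt_zero.mpr (by linarith : α - 1 < 0)).le
    refine le_trans (le_of_eq ?_) h5
    rw [hβdef]
    field_simp
    ring

end
end

section
/- Let ρ and σ be density operators on a finite-dimensional complex Hilbert space with supp(ρ) ⊆ supp(σ), and let α > 1. Then D_α^*(ρ‖σ) = sup over operators T with 0 ≤ T ≤ 𝟙, Tr[ρT] > 0, of { (α/(α−1)) log Tr[ρT] − log Tr[(T^{1/2} σ^{(α−1)/α} T^{1/2})^{α/(α−1)}] }. -/
open Matrix
open scoped ComplexOrder Kronecker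

noncomputable section

section Helpers
variable {ι : Type*} [Fintype ι] [DecidableEq ι]

lemma aux_cont (A : Matrix ι ι ℂ) (f : ℝ → ℝ) : ContinuousOn f (spectrum ℝ A) :=
  (Matrix.finite_real_spectrum (A := A)).continuousOn f

lemma aux_rpowH_s4 {A : Matrix ι ι ℂ} (hA : A.IsHermitian) (p : ℝ) :
    A.rpowH p = cfc (fun x : ℝ => x ^ p) A := by
  rw [hA.cfc_eq, Matrix.rpowH, dif_pos hA, Matrix.IsHermitian.cfc,
    Unitary.conjStarAlgAut_apply]
  rfl

lemma aux_mul (A : Matrix ι ι ℂ) (f g : ℝ → ℝ) :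
    cfc f A * cfc g A = cfc (fun x => f x * g x) A :=
  (cfc_mul f g A (aux_cont A f) (aux_cont A g)).symm

lemma aux_comp {A : Matrix ι ι ℂ} (hA : A.IsHermitian) (g f : ℝ → ℝ) :
    cfc g (cfc f A) = cfc (fun x => g (f x)) A :=
  (cfc_comp' g f A (((Matrix.finite_real_spectrum (A := A)).image _).continuousOn _)
    (aux_cont _ _) hA).symm

lemma aux_herm (A : Matrix ι ι ℂ) (f : ℝ → ℝ) : (cfc f A).IsHermitian :=
  cfc_predicate f A

lemma aux_spec {A : Matrix ι ι ℂ} (hA : A.PosSemidef) {x : ℝ} (hx : x ∈ spectrum ℝ A) :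
    0 ≤ x := by
  rw [hA.1.spectrum_real_eq_range_eigenvalues] at hx
  obtain ⟨i, rfl⟩ := hx
  exact hA.eigenvalues_nonneg i

lemma aux_congr {A : Matrix ι ι ℂ} (hA : A.PosSemidef) {f g : ℝ → ℝ}
    (h : ∀ x, 0 ≤ x → f x = g x) : cfc f A = cfc g A :=
  cfc_congr (fun x hx => h x (aux_spec hA hx))

lemma aux_retr {A : Matrix ι ι ℂ} (hA : A.IsHermitian) (f : ℝ → ℝ) :
    retr (cfc f A) = ∑ i, f (hA.eigenvalues i) := by
  rw [hA.cfc_eq, Matrix.IsHermitian.cfc, Unitary.conjStarAlgAut_apply, retr,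
    Matrix.trace_mul_cycle]
  simp [Matrix.trace]

lemma aux_psd {A : Matrix ι ι ℂ} (f : ℝ → ℝ) (hA : A.PosSemidef) (h : ∀ x, 0 ≤ x → 0 ≤ f x) :
    (cfc f A).PosSemidef := by
  have : cfc f A = cfc (fun x => √(f x)) A * cfc (fun x => √(f x)) A := by
    rw [aux_mul]
    exact aux_congr hA (fun x hx => (Real.mul_self_sqrt (h x hx)).symm)
  rw [this]
  conv => arg 1; arg 1; rw [← (aux_herm A (fun x => √(f x))).eq]
  exact Matrix.posSemidef_conjTranspose_mul_self _

set_option maxHeartbeats 1000000 in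
lemma aux_holder_s4 {X Y : Matrix ι ι ℂ} (hX : X.PosSemidef) (hY : Y.PosSemidef) {p q : ℝ}
    (hpq : p.HolderConjugate q) :
    retr (X * Y) ≤ retr (X.rpowH p) ^ (1 / p) * retr (Y.rpowH q) ^ (1 / q) := by
  rw [aux_rpowH_s4 hX.1, aux_rpowH_s4 hY.1, aux_retr hX.1, aux_retr hY.1]
  set x := hX.1.eigenvalues with hx
  set y := hY.1.eigenvalues with hy
  have hx0 : ∀ i, 0 ≤ x i := hX.eigenvalues_nonneg
  have hy0 : ∀ i, 0 ≤ y i := hY.eigenvalues_nonneg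
  set U : Matrix ι ι ℂ := (hX.1.eigenvectorUnitary : Matrix ι ι ℂ) with hU
  set V : Matrix ι ι ℂ := (hY.1.eigenvectorUnitary : Matrix ι ι ℂ) with hV
  have hXs : X = U * diagonal (fun i => (x i : ℂ)) * star U := by
    conv_lhs => rw [hX.1.spectral_theorem, Unitary.conjStarAlgAut_apply]
    rfl
  have hYs : Y = V * diagonal (fun i => (y i : ℂ)) * star V := by
    conv_lhs => rw [hY.1.spectral_theorem, Unitary.conjStarAlgAut_apply]
    rfl
  have hU1 : U * star U = 1 := Unitary.coe_mul_star_self hX.1.eigenvectorUnitary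
  have hU2 : star U * U = 1 := Unitary.coe_star_mul_self hX.1.eigenvectorUnitary
  have hV1 : V * star V = 1 := Unitary.coe_mul_star_self hY.1.eigenvectorUnitary
  have hV2 : star V * V = 1 := Unitary.coe_star_mul_self hY.1.eigenvectorUnitary
  set W := star U * V with hW
  have hW1 : W * star W = 1 := by
    rw [hW, star_mul, star_star, Matrix.mul_assoc, ← Matrix.mul_assoc V, hV1, Matrix.one_mul, hU2]
  have hW2 : star W * W = 1 := by
    rw [hW, star_mul, star_star, Matrix.mul_assoc, ← Matrix.mul_assoc U, hU1, Matrix.one_mul, hV2]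
  have row : ∀ i, ∑ j, Complex.normSq (W i j) = 1 := by
    intro i
    have := congrFun (congrFun hW1 i) i
    rw [Matrix.mul_apply] at this
    simp only [Matrix.star_apply, Matrix.one_apply_eq, Complex.star_def, Complex.mul_conj] at this
    exact_mod_cast this
  have col : ∀ j, ∑ i, Complex.normSq (W i j) = 1 := by
    intro i
    have := congrFun (congrFun hW2 i) i
    rw [Matrix.mul_apply] at this
    simp only [Matrix.star_apply, Matrix.one_apply_eq, Complex.star_def,
      ← Complex.normSq_eq_conj_mul_self] at this
    exact_mod_cast this
  have htr : retr (X * Y) = ∑ i, ∑ j, x i * y j * Complex.normSq (W i j) := by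
    have e : Matrix.trace (X * Y) = Matrix.trace
        (diagonal (fun i => (x i : ℂ)) * (W * diagonal (fun i => (y i : ℂ)) * star W)) := by
      conv_lhs => rw [hXs, hYs]
      rw [hW, star_mul, star_star]
      simp only [Matrix.mul_assoc]
      rw [Matrix.trace_mul_comm]
      simp only [Matrix.mul_assoc]
    rw [retr, e, Matrix.trace]
    simp only [Matrix.diag, Matrix.diagonal_mul, Complex.re_sum]
    refine Finset.sum_congr rfl fun i _ => ?_
    rw [Matrix.mul_apply, Finset.mul_sum, Complex.re_sum]
    refine Finset.sum_congr rfl fun j _ => ?_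
    rw [Matrix.mul_diagonal, Matrix.star_apply, Complex.star_def]
    have : (x i : ℂ) * (W i j * (y j : ℂ) * (starRingEnd ℂ) (W i j)) =
      ((x i * y j * Complex.normSq (W i j) : ℝ) : ℂ) := by
      push_cast
      rw [← Complex.mul_conj]; ring
    rw [this, Complex.ofReal_re]
  have key := Real.inner_le_Lp_mul_Lq_of_nonneg (Finset.univ : Finset (ι × ι)) hpq
    (f := fun a => x a.1 * Complex.normSq (W a.1 a.2) ^ (1 / p))
    (g := fun a => y a.2 * Complex.normSq (W a.1 a.2) ^ (1 / q))
    (fun a _ => mul_nonneg (hx0 _) (Real.rpow_nonneg (Complex.normSq_nonneg _) _))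
    (fun a _ => mul_nonneg (hy0 _) (Real.rpow_nonneg (Complex.normSq_nonneg _) _))
  have hp := hpq.pos
  have hq := hpq.symm.pos
  have e1 : ∑ a : ι × ι, x a.1 * Complex.normSq (W a.1 a.2) ^ (1 / p) *
      (y a.2 * Complex.normSq (W a.1 a.2) ^ (1 / q)) = retr (X * Y) := by
    rw [htr, Fintype.sum_prod_type]
    refine Finset.sum_congr rfl fun i _ => Finset.sum_congr rfl fun j _ => ?_
    have : Complex.normSq (W i j) ^ (1 / p) * Complex.normSq (W i j) ^ (1 / q) =
        Complex.normSq (W i j) := by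
      rw [← Real.rpow_add_of_nonneg (Complex.normSq_nonneg _) (by positivity) (by positivity),
        one_div, one_div, hpq.inv_add_inv_eq_one, Real.rpow_one]
    calc _ = x i * y j * (Complex.normSq (W i j) ^ (1 / p) * Complex.normSq (W i j) ^ (1 / q)) := by
          ring
      _ = _ := by rw [this]
  have e2 : ∑ a : ι × ι, (x a.1 * Complex.normSq (W a.1 a.2) ^ (1 / p)) ^ p = ∑ i, x i ^ p := by
    rw [Fintype.sum_prod_type]
    refine Finset.sum_congr rfl fun i _ => ?_
    calc _ = ∑ j, x i ^ p * Complex.normSq (W i j) := by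
          refine Finset.sum_congr rfl fun j _ => ?_
          rw [Real.mul_rpow (hx0 _) (Real.rpow_nonneg (Complex.normSq_nonneg _) _),
            ← Real.rpow_mul (Complex.normSq_nonneg _), one_div_mul_cancel hp.ne', Real.rpow_one]
      _ = _ := by rw [← Finset.mul_sum, row, mul_one]
  have e3 : ∑ a : ι × ι, (y a.2 * Complex.normSq (W a.1 a.2) ^ (1 / q)) ^ q = ∑ i, y i ^ q := by
    rw [Fintype.sum_prod_type_right]
    refine Finset.sum_congr rfl fun i _ => ?_
    calc _ = ∑ j, y i ^ q * Complex.normSq (W j i) := by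
          refine Finset.sum_congr rfl fun j _ => ?_
          rw [Real.mul_rpow (hy0 _) (Real.rpow_nonneg (Complex.normSq_nonneg _) _),
            ← Real.rpow_mul (Complex.normSq_nonneg _), one_div_mul_cancel hq.ne', Real.rpow_one]
      _ = _ := by rw [← Finset.mul_sum, col, mul_one]
  rw [e1, e2, e3] at key
  exact key

lemma aux_swap (A B : Matrix ι ι ℂ) (h1 : (A * B).IsHermitian) (h2 : (B * A).IsHermitian)
    (p : ℝ) : retr ((A * B).rpowH p) = retr ((B * A).rpowH p) := by
  rw [aux_rpowH_s4 h1, aux_rpowH_s4 h2, aux_retr h1, aux_retr h2,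
    (Matrix.IsHermitian.eigenvalues_eq_eigenvalues_iff h1 h2).2 (Matrix.charpoly_mul_comm A B)]

open scoped MatrixOrder Matrix.Norms.L2Operator in
lemma aux_bound {M : Matrix ι ι ℂ} (hM : M.IsHermitian) :
    ∃ c : ℝ, 0 < c ∧ (1 - c • M).PosSemidef := by
  have h := IsSelfAdjoint.le_algebraMap_norm_self (a := M) hM
  have hpos : 0 < ‖M‖ + 1 := by positivity
  refine ⟨(‖M‖ + 1)⁻¹, inv_pos.2 hpos, ?_⟩
  have h2 : (algebraMap ℝ (Matrix ι ι ℂ) ‖M‖ - M).PosSemidef := Matrix.le_iff.1 h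
  have h3 := (h2.add Matrix.PosSemidef.one).smul (inv_nonneg.2 hpos.le)
  convert h3 using 1
  have : algebraMap ℝ (Matrix ι ι ℂ) ‖M‖ - M + 1 = (‖M‖ + 1) • (1 : Matrix ι ι ℂ) - M := by
    rw [Algebra.algebraMap_eq_smul_one, add_smul, one_smul]; abel
  rw [this, smul_sub, smul_smul, inv_mul_cancel₀ hpos.ne', one_smul]

lemma aux_iSup {β : Type*} {P : β → Prop} {f : β → ℝ} {D : ℝ}
    (hle : ∀ T, P T → f T ≤ D) (h0 : 0 ≤ D) (hex : ∃ T, P T ∧ f T = D) :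
    D = ⨆ (T : β) (_ : P T), f T := by
  have hle' : ∀ T, (⨆ (_ : P T), f T) ≤ D := by
    intro T
    by_cases h : P T
    · simpa [h] using hle T h
    · simpa [h] using h0
  obtain ⟨T, hT, e⟩ := hex
  apply le_antisymm
  · have := le_ciSup (f := fun T => ⨆ (_ : P T), f T) ⟨D, by rintro _ ⟨T, rfl⟩; exact hle' T⟩ T
    simpa [hT, e] using this
  · have : Nonempty β := ⟨T⟩
    exact ciSup_le hle'

end Helpers

/-- variational expression for the sandwiched Rényi divergence, `α > 1`.
`D_α^*(ρ‖σ) = sup { (α/(α-1)) log Tr[ρT] - log Tr[(T^{1/2} σ^{(α-1)/α} T^{1/2})^{α/(α-1)}]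
  : 0 ≤ T ≤ 𝟙, Tr[ρT] > 0 }`. -/
theorem sandwiched_renyi_variational_gt_one
    {ι : Type*} [Fintype ι] [DecidableEq ι]
    (ρ σ : Matrix ι ι ℂ)
    (hρ : ρ.PosSemidef) (hρtr : ρ.trace = 1)
    (hσ : σ.PosSemidef) (hσtr : σ.trace = 1)
    (hsupp : ∀ v : ι → ℂ, σ.mulVec v = 0 → ρ.mulVec v = 0)
    (α : ℝ) (hα : 1 < α) :
    sandwichedRenyiDiv α ρ σ =
      ⨆ (T : Matrix ι ι ℂ)
        (_ : T.PosSemidef ∧ (1 - T).PosSemidef ∧ 0 < retr (ρ * T)),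
        (α / (α - 1) * Real.log (retr (ρ * T))
          - Real.log (retr (Matrix.rpowH
              (Matrix.rpowH T (2⁻¹ : ℝ) * Matrix.rpowH σ ((α - 1) / α) *
                Matrix.rpowH T (2⁻¹ : ℝ)) (α / (α - 1))))) := by
  have hα0 : 0 < α := by linarith
  have hα1 : 0 < α - 1 := by linarith
  set β := α / (α - 1) with hβ
  have hβ0 : 0 < β := div_pos hα0 hα1
  have hpq : α.HolderConjugate β := Real.HolderConjugate.conjExponent hα
  set s : ℝ := (α - 1) / (2 * α) with hs
  have hs0 : 0 < s := by positivity
  set S : Matrix ι ι ℂ := cfc (fun x : ℝ => x ^ s) σ with hS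
  set S' : Matrix ι ι ℂ := cfc (fun x : ℝ => x ^ (-s)) σ with hS'
  set P : Matrix ι ι ℂ := cfc (fun x : ℝ => if x = 0 then (0:ℝ) else 1) σ with hP
  have hSh : Sᴴ = S := aux_herm _ _
  have hS'h : S'ᴴ = S' := aux_herm _ _
  have hPh : Pᴴ = P := aux_herm _ _
  have hr1 : σ.rpowH ((1 - α) / (2 * α)) = S' := by
    rw [aux_rpowH_s4 hσ.1, show (1 - α) / (2 * α) = -s by rw [hs]; ring]
  have hSS : S * S = σ.rpowH ((α - 1) / α) := by
    rw [aux_rpowH_s4 hσ.1, hS, aux_mul]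
    refine aux_congr hσ fun x hx => ?_
    rw [← Real.rpow_add_of_nonneg hx hs0.le hs0.le]
    congr 1; rw [hs]; field_simp; ring
  have hSS' : S * S' = P := by
    rw [hS, hS', aux_mul, hP]
    refine aux_congr hσ fun x hx => ?_
    by_cases h : x = 0
    · simp [h, Real.zero_rpow hs0.ne']
    · have : 0 < x := lt_of_le_of_ne hx (Ne.symm h)
      simp [h, ← Real.rpow_add this]
  have hS'S : S' * S = P := by
    rw [← hSS', hS, hS', aux_mul, aux_mul]; simp only [mul_comm]
  have hS'P : S' * P = S' := by
    rw [hS', hP, aux_mul]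
    refine aux_congr hσ fun x hx => ?_
    by_cases h : x = 0
    · simp [h, Real.zero_rpow (neg_ne_zero.2 hs0.ne')]
    · simp [h]
  have hσP : σ * P = σ := by
    have : cfc (fun x : ℝ => x) σ = σ := cfc_id' ℝ σ hσ.1
    calc σ * P = cfc (fun x : ℝ => x) σ * P := by rw [this]
      _ = cfc (fun x : ℝ => x) σ := by
        rw [hP, aux_mul]
        refine aux_congr hσ fun x hx => ?_
        by_cases h : x = 0 <;> simp [h]
      _ = σ := this
  have hρP : ρ * P = ρ := by
    have h1 : σ * (1 - P) = 0 := by rw [Matrix.mul_sub, hσP, Matrix.mul_one, sub_self]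
    have h2 : ρ * (1 - P) = 0 := by
      ext i j
      have := hsupp (fun k => (1 - P) k j) (by ext i; exact congrFun (congrFun h1 i) j)
      exact congrFun this i
    rw [Matrix.mul_sub, Matrix.mul_one, sub_eq_zero] at h2
    exact h2.symm
  have hPρ : P * ρ = ρ := by
    have := congrArg conjTranspose hρP
    rwa [conjTranspose_mul, hPh, hρ.1.eq] at this
  set X := S' * ρ * S' with hXdef
  have hX : X.PosSemidef := by
    have := hρ.conjTranspose_mul_mul_same S'
    rwa [hS'h] at this
  have hSXS : S * X * S = ρ := by
    calc S * X * S = (S * S') * ρ * (S' * S) := by rw [hXdef]; simp only [Matrix.mul_assoc]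
      _ = ρ := by rw [hSS', hS'S, hPρ, hρP]
  have hXP : X * P = X := by rw [hXdef, Matrix.mul_assoc, hS'P]
  have htr : ∀ T, retr (ρ * T) = retr (X * (S * T * S)) := by
    intro T
    rw [retr, retr, ← hSXS]
    congr 1
    calc (S * X * S * T).trace = (S * (X * S * T)).trace := by simp only [Matrix.mul_assoc]
      _ = _ := by rw [Matrix.trace_mul_comm]; simp only [Matrix.mul_assoc]
  have hY : ∀ T : Matrix ι ι ℂ, T.PosSemidef → (S * T * S).PosSemidef := by
    intro T hT
    have := hT.conjTranspose_mul_mul_same S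
    rwa [hSh] at this
  have hsw : ∀ T : Matrix ι ι ℂ, T.PosSemidef →
      retr (Matrix.rpowH (Matrix.rpowH T (2⁻¹ : ℝ) * Matrix.rpowH σ ((α - 1) / α) *
        Matrix.rpowH T (2⁻¹ : ℝ)) β) = retr ((S * T * S).rpowH β) := by
    intro T hT
    set R := T.rpowH (2⁻¹ : ℝ) with hR
    have hR' : R = cfc (fun x : ℝ => x ^ (2⁻¹ : ℝ)) T := aux_rpowH_s4 hT.1 _
    have hRh : Rᴴ = R := by rw [hR']; exact aux_herm _ _
    have hRR : R * R = T := by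
      rw [hR', aux_mul]
      conv_rhs => rw [← cfc_id' ℝ T hT.1]
      refine aux_congr hT fun x hx => ?_
      rw [← Real.rpow_add_of_nonneg hx (by norm_num) (by norm_num)]
      norm_num
    have e1 : R * σ.rpowH ((α - 1) / α) * R = (R * S) * (S * R) := by
      rw [← hSS]; simp only [Matrix.mul_assoc]
    have e2 : S * T * S = (S * R) * (R * S) := by
      rw [← hRR]; simp only [Matrix.mul_assoc]
    rw [e1, e2]
    apply aux_swap
    · rw [Matrix.IsHermitian, conjTranspose_mul, conjTranspose_mul, conjTranspose_mul, hRh, hSh]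
    · rw [Matrix.IsHermitian, conjTranspose_mul, conjTranspose_mul, conjTranspose_mul, hRh, hSh]
  have hnn : ∀ (A : Matrix ι ι ℂ) (p : ℝ), A.PosSemidef → 0 ≤ retr (A.rpowH p) := by
    intro A p hA
    rw [aux_rpowH_s4 hA.1, aux_retr hA.1]
    exact Finset.sum_nonneg fun i _ => Real.rpow_nonneg (hA.eigenvalues_nonneg i) _
  have hmain : ∀ T : Matrix ι ι ℂ, T.PosSemidef → 0 < retr (ρ * T) →
      0 < retr (X.rpowH α) ∧ β * Real.log (retr (ρ * T)) - Real.log (retr ((S * T * S).rpowH β)) ≤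
        (α - 1)⁻¹ * Real.log (retr (X.rpowH α)) := by
    intro T hT hpos
    have hh := aux_holder_s4 hX (hY T hT) hpq
    rw [← htr] at hh
    have ha := hnn X α hX
    have hb := hnn _ β (hY T hT)
    have ha' : 0 < retr (X.rpowH α) := by
      refine lt_of_le_of_ne ha fun h => ?_
      rw [← h, Real.zero_rpow (by positivity), zero_mul] at hh
      linarith
    have hb' : 0 < retr ((S * T * S).rpowH β) := by
      refine lt_of_le_of_ne hb fun h => ?_
      rw [← h, Real.zero_rpow (by positivity), mul_zero] at hh
      linarith
    refine ⟨ha', ?_⟩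
    have hl := Real.log_le_log hpos hh
    rw [Real.log_mul (Real.rpow_pos_of_pos ha' _).ne' (Real.rpow_pos_of_pos hb' _).ne',
      Real.log_rpow ha', Real.log_rpow hb'] at hl
    have hl2 := mul_le_mul_of_nonneg_left hl hβ0.le
    have e1 : β * (1 / α * Real.log (retr (X.rpowH α)) +
        1 / β * Real.log (retr ((S * T * S).rpowH β))) =
        (α - 1)⁻¹ * Real.log (retr (X.rpowH α)) + Real.log (retr ((S * T * S).rpowH β)) := by
      rw [mul_add, ← mul_assoc, ← mul_assoc, mul_one_div_cancel hβ0.ne', one_mul]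
      congr 2
      rw [hβ]; field_simp
    rw [e1] at hl2
    linarith
  have hρ1 : retr (ρ * 1) = 1 := by rw [Matrix.mul_one, retr, hρtr]; simp
  have hQ := (hmain 1 Matrix.PosSemidef.one (by rw [hρ1]; norm_num)).1
  have hD : sandwichedRenyiDiv α ρ σ = (α - 1)⁻¹ * Real.log (retr (X.rpowH α)) := by
    rw [sandwichedRenyiDiv, hr1]
  rw [hD]
  apply aux_iSup
  · rintro T ⟨hT, -, hpos⟩
    rw [hsw T hT]
    exact (hmain T hT hpos).2
  · have h := (hmain 1 Matrix.PosSemidef.one (by rw [hρ1]; norm_num)).2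
    have e : retr ((S * 1 * S).rpowH β) = 1 := by
      rw [Matrix.mul_one, hSS, aux_rpowH_s4 hσ.1, aux_rpowH_s4 (aux_herm _ _)]
      rw [aux_comp hσ.1]
      have : cfc (fun x : ℝ => (x ^ ((α - 1) / α)) ^ β) σ = σ := by
        conv_rhs => rw [← cfc_id' ℝ σ hσ.1]
        refine aux_congr hσ fun x hx => ?_
        rw [← Real.rpow_mul hx, show (α - 1) / α * β = 1 by rw [hβ]; field_simp, Real.rpow_one]
      rw [this, retr, hσtr]; simp
    rw [hρ1, e] at h
    simpa using h
  · set G : Matrix ι ι ℂ := cfc (fun x : ℝ => x ^ (α - 1)) X with hG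
    have hGpsd : G.PosSemidef := aux_psd _ hX fun x hx => Real.rpow_nonneg hx _
    have hGh : Gᴴ = G := hGpsd.1
    have hidX : cfc (fun x : ℝ => x) X = X := cfc_id' ℝ X hX.1
    have hGP : G * P = G := by
      have : G = cfc (fun x : ℝ => x ^ (α - 1) * x⁻¹) X * X := by
        conv_rhs => arg 2; rw [← hidX]
        rw [aux_mul, hG]
        refine aux_congr hX fun x hx => ?_
        by_cases h : x = 0
        · simp [h, Real.zero_rpow hα1.ne']
        · simp [h]
      rw [this, Matrix.mul_assoc, hXP]
    have hPG : P * G = G := by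
      have := congrArg conjTranspose hGP
      rwa [conjTranspose_mul, hPh, hGh] at this
    have hM : (S' * G * S').PosSemidef := by
      have := hGpsd.conjTranspose_mul_mul_same S'
      rwa [hS'h] at this
    obtain ⟨c, hc, hcM⟩ := aux_bound hM.1
    have hT : (c • (S' * G * S')).PosSemidef := hM.smul hc.le
    have hSTS : S * (c • (S' * G * S')) * S = cfc (fun x : ℝ => c * x ^ (α - 1)) X := by
      rw [cfc_const_mul c _ X (aux_cont _ _), Matrix.mul_smul, Matrix.smul_mul]
      congr 1
      calc S * (S' * G * S') * S = (S * S') * G * (S' * S) := by simp only [Matrix.mul_assoc]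
        _ = G := by rw [hSS', hS'S, hPG, hGP]
    have hQe : retr (X.rpowH α) = ∑ i, hX.1.eigenvalues i ^ α := by
      rw [aux_rpowH_s4 hX.1, aux_retr hX.1]
    have t1 : retr (ρ * (c • (S' * G * S'))) = c * retr (X.rpowH α) := by
      rw [htr, hSTS]
      conv_lhs => arg 1; arg 1; rw [← hidX]
      rw [aux_mul, aux_retr hX.1, hQe, Finset.mul_sum]
      refine Finset.sum_congr rfl fun i _ => ?_
      have h0 := hX.eigenvalues_nonneg i
      have : hX.1.eigenvalues i ^ α = hX.1.eigenvalues i ^ (α - 1) * hX.1.eigenvalues i := by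
        conv_rhs => arg 2; rw [← Real.rpow_one (hX.1.eigenvalues i)]
        rw [← Real.rpow_add_of_nonneg h0 hα1.le zero_le_one]
        congr 1; ring
      rw [this]; ring
    have t2 : retr ((S * (c • (S' * G * S')) * S).rpowH β) = c ^ β * retr (X.rpowH α) := by
      rw [hSTS, aux_rpowH_s4 (aux_herm _ _),
        aux_comp hX.1,
        aux_retr hX.1, hQe, Finset.mul_sum]
      refine Finset.sum_congr rfl fun i _ => ?_
      have h0 := hX.eigenvalues_nonneg i
      rw [Real.mul_rpow hc.le (Real.rpow_nonneg h0 _), ← Real.rpow_mul h0]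
      congr 2
      rw [hβ]; field_simp
    refine ⟨c • (S' * G * S'), ⟨hT, hcM, ?_⟩, ?_⟩
    · rw [t1]; exact mul_pos hc hQ
    · rw [hsw _ hT, t1, t2, Real.log_mul hc.ne' hQ.ne',
        Real.log_mul (Real.rpow_pos_of_pos hc _).ne' hQ.ne', Real.log_rpow hc]
      have : β = 1 + (α - 1)⁻¹ := by rw [hβ]; field_simp; ring
      rw [this]; ring


end
end

section
/- Let ρ and σ be density operators on a finite-dimensional complex Hilbert space with supp(ρ) ⊆ supp(σ), and let α ∈ (0,1). Then D_α^*(ρ‖σ) = sup over positive definite operators T with 0 < T ≤ 𝟙 of { (α/(α−1)) log Tr[ρT] − log Tr[(T^{1/2} σ^{(α−1)/α} T^{1/2})^{α/(α−1)}] } (note α/(α−1) < 0, so negative powers are taken via functional calculus). -/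
open Matrix
open scoped ComplexOrder Kronecker

noncomputable section

namespace SRV

variable {ι : Type*} [Fintype ι] [DecidableEq ι]

/-- Matrix with eigenbasis `U` and real eigenvalues `d`. -/
def fc (U : Matrix.unitaryGroup ι ℂ) (d : ι → ℝ) : Matrix ι ι ℂ :=
  (U : Matrix ι ι ℂ) * Matrix.diagonal (fun i => ((d i : ℝ) : ℂ)) * star (U : Matrix ι ι ℂ)

lemma fc_mul (U : Matrix.unitaryGroup ι ℂ) (d e : ι → ℝ) :
    fc U d * fc U e = fc U (fun i => d i * e i) := by
  have h : star (U : Matrix ι ι ℂ) * (U : Matrix ι ι ℂ) = 1 := Unitary.coe_star_mul_self U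
  unfold fc
  calc _ = (U : Matrix ι ι ℂ) * Matrix.diagonal (fun i => ((d i : ℝ) : ℂ)) *
        (star (U : Matrix ι ι ℂ) * (U : Matrix ι ι ℂ)) *
        Matrix.diagonal (fun i => ((e i : ℝ) : ℂ)) * star (U : Matrix ι ι ℂ) := by
        simp only [Matrix.mul_assoc]
    _ = _ := by
        rw [h, Matrix.mul_one, Matrix.mul_assoc (U : Matrix ι ι ℂ), Matrix.diagonal_mul_diagonal]
        simp

lemma fc_one (U : Matrix.unitaryGroup ι ℂ) : fc U (fun _ => 1) = 1 := by
  have h : (U : Matrix ι ι ℂ) * star (U : Matrix ι ι ℂ) = 1 := Unitary.coe_mul_star_self U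
  simp [fc, h]

lemma fc_add (U : Matrix.unitaryGroup ι ℂ) (d e : ι → ℝ) :
    fc U d + fc U e = fc U (fun i => d i + e i) := by
  unfold fc
  rw [← Matrix.add_mul, ← Matrix.mul_add, Matrix.diagonal_add]
  simp

lemma fc_smul (U : Matrix.unitaryGroup ι ℂ) (c : ℝ) (d : ι → ℝ) :
    (c : ℂ) • fc U d = fc U (fun i => c * d i) := by
  unfold fc
  rw [← Matrix.smul_mul, ← Matrix.mul_smul, ← Matrix.diagonal_smul]
  congr 3
  ext i
  simp

lemma fc_herm (U : Matrix.unitaryGroup ι ℂ) (d : ι → ℝ) : (fc U d)ᴴ = fc U d := by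
  unfold fc
  simp only [Matrix.star_eq_conjTranspose, Matrix.conjTranspose_mul,
    Matrix.conjTranspose_conjTranspose, Matrix.diagonal_conjTranspose, Matrix.mul_assoc]
  congr 3
  ext i
  simp

lemma fc_psd (U : Matrix.unitaryGroup ι ℂ) {d : ι → ℝ} (hd : ∀ i, 0 ≤ d i) :
    (fc U d).PosSemidef := by
  unfold fc
  rw [Matrix.star_eq_conjTranspose]
  apply Matrix.PosSemidef.mul_mul_conjTranspose_same
  apply Matrix.PosSemidef.diagonal
  intro i
  simpa using hd i

lemma trace_fc (U : Matrix.unitaryGroup ι ℂ) (d : ι → ℝ) : retr (fc U d) = ∑ i, d i := by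
  have h : star (U : Matrix ι ι ℂ) * (U : Matrix ι ι ℂ) = 1 := Unitary.coe_star_mul_self U
  unfold fc retr
  rw [Matrix.trace_mul_comm, ← Matrix.mul_assoc, h, Matrix.one_mul, Matrix.trace_diagonal]
  simp

lemma rpowH_eq {A : Matrix ι ι ℂ} (hA : A.IsHermitian) (p : ℝ) :
    Matrix.rpowH A p = fc hA.eigenvectorUnitary (fun i => hA.eigenvalues i ^ p) := by
  unfold Matrix.rpowH fc
  rw [dif_pos hA]

lemma eq_fc {A : Matrix ι ι ℂ} (hA : A.IsHermitian) :
    A = fc hA.eigenvectorUnitary hA.eigenvalues := by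
  conv_lhs => rw [hA.spectral_theorem]
  rfl

lemma retr_rpowH {A : Matrix ι ι ℂ} (hA : A.IsHermitian) (p : ℝ) :
    retr (Matrix.rpowH A p) = ∑ i, hA.eigenvalues i ^ p := by
  rw [rpowH_eq hA, trace_fc]

lemma retr_rpowH_roots {A : Matrix ι ι ℂ} (hA : A.IsHermitian) (p : ℝ) :
    retr (Matrix.rpowH A p) = (A.charpoly.roots.map (fun z : ℂ => z.re ^ p)).sum := by
  rw [retr_rpowH hA, hA.roots_charpoly_eq_eigenvalues]
  simp [← Finset.sum_map_val, Multiset.map_map, Function.comp_def]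

lemma retr_rpowH_congr {A B : Matrix ι ι ℂ} (hA : A.IsHermitian) (hB : B.IsHermitian)
    (h : A.charpoly = B.charpoly) (p : ℝ) :
    retr (Matrix.rpowH A p) = retr (Matrix.rpowH B p) := by
  rw [retr_rpowH_roots hA, retr_rpowH_roots hB, h]

lemma retr_rpowH_fc (U : Matrix.unitaryGroup ι ℂ) (d : ι → ℝ) (p : ℝ) :
    retr (Matrix.rpowH (fc U d) p) = ∑ i, d i ^ p := by
  have h : star (U : Matrix ι ι ℂ) * (U : Matrix ι ι ℂ) = 1 := Unitary.coe_star_mul_self U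
  rw [retr_rpowH_roots (fc_herm U d)]
  have : (fc U d).charpoly = ∏ i, (Polynomial.X - Polynomial.C ((d i : ℝ) : ℂ)) := by
    unfold fc
    rw [Matrix.charpoly_mul_comm, ← Matrix.mul_assoc, h, Matrix.one_mul, Matrix.charpoly_diagonal]
  rw [this, Polynomial.roots_prod _ _ (Finset.prod_ne_zero_iff.2
    (fun i _ => Polynomial.X_sub_C_ne_zero _))]
  simp [← Finset.sum_map_val, Multiset.map_map, Function.comp_def]

/-- Overlap weights. -/
def wt (U V : Matrix.unitaryGroup ι ℂ) (i j : ι) : ℝ :=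
  Complex.normSq ((star (U : Matrix ι ι ℂ) * (V : Matrix ι ι ℂ)) i j)

lemma wt_nonneg (U V : Matrix.unitaryGroup ι ℂ) (i j : ι) : 0 ≤ wt U V i j :=
  Complex.normSq_nonneg _

lemma wt_row (U V : Matrix.unitaryGroup ι ℂ) (i : ι) : ∑ j, wt U V i j = 1 := by
  have h : ((star U * V : Matrix.unitaryGroup ι ℂ) : Matrix ι ι ℂ) *
    star ((star U * V : Matrix.unitaryGroup ι ℂ) : Matrix ι ι ℂ) = 1 :=
    Unitary.coe_mul_star_self (star U * V)
  have h2 := congrArg Complex.re (congrFun (congrFun h i) i)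
  simp only [Matrix.mul_apply (M := ((star U * V : Matrix.unitaryGroup ι ℂ) : Matrix ι ι ℂ)),
    Matrix.one_apply_eq, Matrix.star_apply, Complex.re_sum, Complex.one_re] at h2
  rw [← h2]
  refine Finset.sum_congr rfl fun j _ => ?_
  simp [wt, Complex.normSq_apply]

lemma wt_col (U V : Matrix.unitaryGroup ι ℂ) (j : ι) : ∑ i, wt U V i j = 1 := by
  have h : star ((star U * V : Matrix.unitaryGroup ι ℂ) : Matrix ι ι ℂ) *
    ((star U * V : Matrix.unitaryGroup ι ℂ) : Matrix ι ι ℂ) = 1 :=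
    Unitary.coe_star_mul_self (star U * V)
  have h2 := congrArg Complex.re (congrFun (congrFun h j) j)
  simp only [Matrix.mul_apply (N := ((star U * V : Matrix.unitaryGroup ι ℂ) : Matrix ι ι ℂ)),
    Matrix.one_apply_eq, Matrix.star_apply, Complex.re_sum, Complex.one_re] at h2
  rw [← h2]
  refine Finset.sum_congr rfl fun j _ => ?_
  simp [wt, Complex.normSq_apply]

lemma trace_fc_mul_fc (U V : Matrix.unitaryGroup ι ℂ) (x y : ι → ℝ) :
    retr (fc U x * fc V y) = ∑ i, ∑ j, wt U V i j * (x i * y j) := by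
  have e : (fc U x * fc V y).trace = (Matrix.diagonal (fun i => ((x i : ℝ) : ℂ)) *
      (star (U : Matrix ι ι ℂ) * (V : Matrix ι ι ℂ)) * Matrix.diagonal (fun i => ((y i : ℝ) : ℂ)) *
      star (star (U : Matrix ι ι ℂ) * (V : Matrix ι ι ℂ))).trace := by
    unfold fc
    rw [Matrix.mul_assoc, Matrix.mul_assoc, Matrix.trace_mul_comm]
    congr 1
    simp only [Matrix.star_eq_conjTranspose, Matrix.conjTranspose_mul,
      Matrix.conjTranspose_conjTranspose, Matrix.mul_assoc]
  unfold retr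
  rw [e, Matrix.trace, Complex.re_sum]
  refine Finset.sum_congr rfl fun i _ => ?_
  rw [Matrix.diag_apply, Matrix.mul_apply, Complex.re_sum]
  refine Finset.sum_congr rfl fun j _ => ?_
  rw [Matrix.mul_diagonal, Matrix.diagonal_mul, Matrix.star_apply]
  simp only [wt, Complex.normSq_apply]
  generalize (star (U : Matrix ι ι ℂ) * (V : Matrix ι ι ℂ)) i j = z
  simp
  ring

lemma wt_supp (U V : Matrix.unitaryGroup ι ℂ) (x y : ι → ℝ)
    (h : ∀ v : ι → ℂ, (fc V y).mulVec v = 0 → (fc U x).mulVec v = 0) (i j : ι) (hj : y j = 0) :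
    wt U V i j = 0 ∨ x i = 0 := by
  have hV : star (V : Matrix ι ι ℂ) * (V : Matrix ι ι ℂ) = 1 := Unitary.coe_star_mul_self V
  have hU : star (U : Matrix ι ι ℂ) * (U : Matrix ι ι ℂ) = 1 := Unitary.coe_star_mul_self U
  have h1 := h ((V : Matrix ι ι ℂ).mulVec (Pi.single j 1)) (by
    unfold fc
    rw [Matrix.mulVec_mulVec, Matrix.mul_assoc, hV, Matrix.mul_one, ← Matrix.mulVec_mulVec]
    have : (Matrix.diagonal (fun i => ((y i : ℝ) : ℂ))).mulVec (Pi.single j 1) = 0 := by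
      ext k
      simp [Matrix.mulVec_diagonal, Pi.single_apply]
      intro hk
      rw [hk, hj]
    rw [this, Matrix.mulVec_zero])
  have h2 := congrArg (fun v => (star (U : Matrix ι ι ℂ)).mulVec v) h1
  simp only [Matrix.mulVec_mulVec, Matrix.mulVec_zero] at h2
  unfold fc at h2
  rw [← Matrix.mul_assoc, ← Matrix.mul_assoc, ← Matrix.mul_assoc, hU, Matrix.one_mul,
    Matrix.mul_assoc] at h2
  have h3 := congrFun h2 i
  rw [Matrix.mulVec_single_one] at h3
  simp only [Matrix.col_apply, Matrix.diagonal_mul, Pi.zero_apply, mul_eq_zero,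
    Complex.ofReal_eq_zero] at h3
  rcases h3 with h3 | h3
  · exact Or.inr h3
  · left
    rw [wt, h3, map_zero]

lemma trace_mul_nonneg {X Y : Matrix ι ι ℂ} (hX : X.PosSemidef) (hY : Y.PosSemidef) :
    0 ≤ retr (X * Y) := by
  rw [eq_fc hX.1, eq_fc hY.1, trace_fc_mul_fc]
  exact Finset.sum_nonneg fun i _ => Finset.sum_nonneg fun j _ =>
    mul_nonneg (wt_nonneg _ _ _ _) (mul_nonneg (hX.eigenvalues_nonneg i) (hY.eigenvalues_nonneg j))

/-- Reverse-Hölder type trace inequality. -/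
lemma holder {X Y : Matrix ι ι ℂ} (hX : X.PosSemidef) (hY : Y.PosSemidef)
    (h : ∀ v : ι → ℂ, Y.mulVec v = 0 → X.mulVec v = 0) {α : ℝ} (h0 : 0 < α) (h1 : α < 1) :
    retr (Matrix.rpowH X α) ≤
      retr (X * Y) ^ α * retr (Matrix.rpowH Y (α / (α - 1))) ^ (1 - α) := by
  rw [retr_rpowH hX.1, retr_rpowH hY.1]
  rw [eq_fc hX.1, eq_fc hY.1] at h
  have ht := trace_fc_mul_fc hX.1.eigenvectorUnitary hY.1.eigenvectorUnitary
    hX.1.eigenvalues hY.1.eigenvalues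
  rw [← eq_fc hX.1, ← eq_fc hY.1] at ht
  rw [ht]
  have hx := hX.eigenvalues_nonneg
  have hy := hY.eigenvalues_nonneg
  have hs := wt_supp _ _ _ _ h
  revert hx hy hs
  generalize hX.1.eigenvalues = x
  generalize hY.1.eigenvalues = y
  generalize hX.1.eigenvectorUnitary = U
  generalize hY.1.eigenvectorUnitary = V
  intro hx hy hs
  have hne : α - 1 ≠ 0 := by linarith
  have hne' : 1 - α ≠ 0 := by linarith
  have hpq : (α⁻¹).HolderConjugate ((1 - α)⁻¹) := by
    rw [Real.holderConjugate_iff]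
    refine ⟨(one_lt_inv₀ h0).2 h1, ?_⟩
    simp
  have key := Real.inner_le_Lp_mul_Lq_of_nonneg (Finset.univ : Finset (ι × ι)) (p := α⁻¹)
    (q := (1 - α)⁻¹) (f := fun p => (wt U V p.1 p.2 * (x p.1 * y p.2)) ^ α)
    (g := fun p => (wt U V p.1 p.2 * y p.2 ^ (α / (α - 1))) ^ (1 - α)) hpq
    (fun p _ => Real.rpow_nonneg (mul_nonneg (wt_nonneg _ _ _ _) (mul_nonneg (hx _) (hy _))) _)
    (fun p _ => Real.rpow_nonneg (mul_nonneg (wt_nonneg _ _ _ _) (Real.rpow_nonneg (hy _) _)) _)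
  have e1 : ∀ p : ι × ι, ((wt U V p.1 p.2 * (x p.1 * y p.2)) ^ α) ^ α⁻¹ =
      wt U V p.1 p.2 * (x p.1 * y p.2) := fun p =>
    Real.rpow_rpow_inv (mul_nonneg (wt_nonneg _ _ _ _) (mul_nonneg (hx _) (hy _))) h0.ne'
  have e2 : ∀ p : ι × ι, ((wt U V p.1 p.2 * y p.2 ^ (α / (α - 1))) ^ (1 - α)) ^ (1 - α)⁻¹ =
      wt U V p.1 p.2 * y p.2 ^ (α / (α - 1)) := fun p =>
    Real.rpow_rpow_inv (mul_nonneg (wt_nonneg _ _ _ _) (Real.rpow_nonneg (hy _) _)) hne'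
  have e3 : ∀ p : ι × ι, (wt U V p.1 p.2 * (x p.1 * y p.2)) ^ α *
      (wt U V p.1 p.2 * y p.2 ^ (α / (α - 1))) ^ (1 - α) = wt U V p.1 p.2 * x p.1 ^ α := by
    rintro ⟨i, j⟩
    simp only
    have hw := wt_nonneg U V i j
    rcases hw.eq_or_lt with hw0 | hw0
    · rw [← hw0]
      simp [Real.zero_rpow h0.ne']
    rcases (hy j).eq_or_lt with hj | hj
    · rcases hs i j hj.symm with h3 | h3
      · exact absurd h3 hw0.ne'
      · rw [h3]
        simp [Real.zero_rpow h0.ne']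
    · rw [Real.mul_rpow hw (mul_nonneg (hx i) hj.le), Real.mul_rpow (hx i) hj.le,
        Real.mul_rpow hw (Real.rpow_nonneg hj.le _), ← Real.rpow_mul hj.le]
      have q1 : wt U V i j ^ α * wt U V i j ^ (1 - α) = wt U V i j := by
        rw [← Real.rpow_add hw0]; simp
      have q2 : y j ^ α * y j ^ (α / (α - 1) * (1 - α)) = 1 := by
        rw [← Real.rpow_add hj]
        have : α + α / (α - 1) * (1 - α) = 0 := by field_simp; ring
        rw [this, Real.rpow_zero]
      calc _ = (wt U V i j ^ α * wt U V i j ^ (1 - α)) * x i ^ α *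
            (y j ^ α * y j ^ (α / (α - 1) * (1 - α))) := by ring
        _ = _ := by rw [q1, q2, mul_one]
  simp only [e1, e2, e3] at key
  rw [one_div, one_div, inv_inv, inv_inv] at key
  simp only [Fintype.sum_prod_type] at key
  have s1 : ∑ i, ∑ j, wt U V i j * x i ^ α = ∑ i, x i ^ α := by
    refine Finset.sum_congr rfl fun i _ => ?_
    rw [← Finset.sum_mul, wt_row, one_mul]
  have s2 : ∑ i, ∑ j, wt U V i j * y j ^ (α / (α - 1)) = ∑ j, y j ^ (α / (α - 1)) := by
    rw [Finset.sum_comm]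
    refine Finset.sum_congr rfl fun i _ => ?_
    rw [← Finset.sum_mul, wt_col, one_mul]
  rwa [s1, s2] at key

lemma rpow_add_ne {z p q : ℝ} (hz : 0 ≤ z) (hp : p ≠ 0) (hpq : p + q ≠ 0) :
    z ^ p * z ^ q = z ^ (p + q) := by
  rcases hz.eq_or_lt with h | h
  · rw [← h, Real.zero_rpow hp, Real.zero_rpow hpq, zero_mul]
  · rw [Real.rpow_add h]

lemma rpowH_herm {Z : Matrix ι ι ℂ} (hZ : Z.PosSemidef) (p : ℝ) :
    (Matrix.rpowH Z p)ᴴ = Matrix.rpowH Z p := by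
  rw [rpowH_eq hZ.1, fc_herm]

lemma rpowH_psd {Z : Matrix ι ι ℂ} (hZ : Z.PosSemidef) (p : ℝ) :
    (Matrix.rpowH Z p).PosSemidef := by
  rw [rpowH_eq hZ.1]
  exact fc_psd _ fun i => Real.rpow_nonneg (hZ.eigenvalues_nonneg i) _

lemma rpowH_one {Z : Matrix ι ι ℂ} (hZ : Z.PosSemidef) : Matrix.rpowH Z 1 = Z := by
  rw [rpowH_eq hZ.1]
  simp only [Real.rpow_one]
  exact (eq_fc hZ.1).symm

lemma rpowH_mul {Z : Matrix ι ι ℂ} (hZ : Z.PosSemidef) {p q : ℝ} (hp : p ≠ 0)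
    (hpq : p + q ≠ 0) : Matrix.rpowH Z p * Matrix.rpowH Z q = Matrix.rpowH Z (p + q) := by
  simp only [rpowH_eq hZ.1, fc_mul]
  congr 1
  ext i
  exact rpow_add_ne (hZ.eigenvalues_nonneg i) hp hpq

lemma retr_psd_nonneg {Z : Matrix ι ι ℂ} (hZ : Z.PosSemidef) : 0 ≤ retr Z := by
  have := hZ.trace_nonneg
  exact (Complex.le_def.1 this).1

/-- `Tr (c Z^p)^q = c^q Tr Z^(pq)`. -/
lemma retr_rpowH_smul_rpowH {Z : Matrix ι ι ℂ} (hZ : Z.PosSemidef) {c : ℝ} (hc : 0 ≤ c)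
    (p q : ℝ) : retr (Matrix.rpowH ((c : ℂ) • Matrix.rpowH Z p) q) =
      c ^ q * retr (Matrix.rpowH Z (p * q)) := by
  rw [rpowH_eq hZ.1 p, fc_smul, retr_rpowH_fc, retr_rpowH hZ.1, Finset.mul_sum]
  refine Finset.sum_congr rfl fun i _ => ?_
  have := hZ.eigenvalues_nonneg i
  rw [Real.mul_rpow hc (Real.rpow_nonneg this _), ← Real.rpow_mul this]

lemma mul_eq_zero_of_ker {M R N : Matrix ι ι ℂ}
    (h : ∀ v : ι → ℂ, M.mulVec v = 0 → R.mulVec v = 0) (hN : M * N = 0) : R * N = 0 := by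
  ext i j
  have h1 := h (N.col j) (by
    ext k
    have := congrFun (congrFun hN k) j
    simpa [Matrix.mul_apply, Matrix.mulVec, dotProduct] using this)
  have := congrFun h1 i
  simpa [Matrix.mul_apply, Matrix.mulVec, dotProduct] using this

/-- The data attached to `ρ, σ` used in the proof. -/
structure Data (ρ A B P : Matrix ι ι ℂ) : Prop where
  hρ : ρ.PosSemidef
  tr : ρ.trace = 1
  hA : Aᴴ = A
  hB : Bᴴ = B
  hP : Pᴴ = P
  AB : A * B = P
  BA : B * A = P
  PP : P * P = P
  PA : P * A = A
  AP : A * P = A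
  PB : P * B = B
  BP : B * P = B
  ρP : ρ * P = ρ
  Pρ : P * ρ = ρ

lemma exists_data {ρ σ : Matrix ι ι ℂ} (hρ : ρ.PosSemidef) (hρtr : ρ.trace = 1)
    (hσ : σ.PosSemidef) (hsupp : ∀ v : ι → ℂ, σ.mulVec v = 0 → ρ.mulVec v = 0)
    {s : ℝ} (hs : 0 < s) :
    ∃ P, Data ρ (Matrix.rpowH σ (-s)) (Matrix.rpowH σ s) P := by
  set U := hσ.1.eigenvectorUnitary
  set l := hσ.1.eigenvalues with hl
  have hl0 : ∀ i, 0 ≤ l i := hσ.eigenvalues_nonneg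
  have hcomp : ∀ i, l i * (l i ^ (-s) * l i ^ s) = l i ∧
      (l i ^ (-s) * l i ^ s = 1 ∨ l i ^ (-s) * l i ^ s = 0) ∧
      (l i ^ (-s) * l i ^ s) * l i ^ s = l i ^ s ∧
      (l i ^ (-s) * l i ^ s) * l i ^ (-s) = l i ^ (-s) := by
    intro i
    rcases (hl0 i).eq_or_lt with h | h
    · rw [← h, Real.zero_rpow hs.ne', Real.zero_rpow (neg_ne_zero.2 hs.ne')]
      simp
    · have : l i ^ (-s) * l i ^ s = 1 := by rw [← Real.rpow_add h]; simp
      simp [this]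
  have ρP : ρ * fc U (fun i => l i ^ (-s) * l i ^ s) = ρ := by
    have h1 : σ * (1 - fc U (fun i => l i ^ (-s) * l i ^ s)) = 0 := by
      rw [Matrix.mul_sub, Matrix.mul_one, sub_eq_zero]
      conv_lhs => rw [eq_fc hσ.1]
      conv_rhs => rw [eq_fc hσ.1]
      rw [fc_mul]
      congr 1
      ext i
      exact (hcomp i).1.symm
    have h2 := mul_eq_zero_of_ker hsupp h1
    rw [Matrix.mul_sub, Matrix.mul_one, sub_eq_zero] at h2
    exact h2.symm
  refine ⟨fc U (fun i => l i ^ (-s) * l i ^ s), ?_⟩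
  rw [rpowH_eq hσ.1, rpowH_eq hσ.1]
  refine ⟨hρ, hρtr, fc_herm _ _, fc_herm _ _, fc_herm _ _, ?_, ?_, ?_, ?_, ?_, ?_, ?_, ρP, ?_⟩
  · rw [fc_mul]
  · rw [fc_mul]
    congr 1; ext i; exact mul_comm _ _
  · rw [fc_mul]
    congr 1; ext i
    rcases (hcomp i).2.1 with h | h <;> rw [h] <;> simp
  · rw [fc_mul]
    congr 1; ext i; exact (hcomp i).2.2.2
  · rw [fc_mul]
    congr 1; ext i; rw [mul_comm]; exact (hcomp i).2.2.2
  · rw [fc_mul]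
    congr 1; ext i; exact (hcomp i).2.2.1
  · rw [fc_mul]
    congr 1; ext i; rw [mul_comm]; exact (hcomp i).2.2.1
  · have := congrArg Matrix.conjTranspose ρP
    rwa [Matrix.conjTranspose_mul, fc_herm, hρ.1] at this

section core
variable {ρ A B P : Matrix ι ι ℂ}

lemma Data.X_psd (D : Data ρ A B P) : (B * ρ * B).PosSemidef := by
  have := D.hρ.mul_mul_conjTranspose_same B
  rwa [D.hB] at this

lemma Data.Y_psd (D : Data ρ A B P) {T : Matrix ι ι ℂ} (hT : T.PosSemidef) :
    (A * T * A).PosSemidef := by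
  have := hT.mul_mul_conjTranspose_same A
  rwa [D.hA] at this

lemma Data.P_psd (D : Data ρ A B P) : P.PosSemidef := by
  have := Matrix.posSemidef_conjTranspose_mul_self P
  rwa [D.hP, D.PP] at this

lemma Data.Pc_psd (D : Data ρ A B P) : (1 - P).PosSemidef := by
  have := Matrix.posSemidef_conjTranspose_mul_self (1 - P)
  rw [Matrix.conjTranspose_sub, D.hP, Matrix.conjTranspose_one] at this
  have e : (1 - P) * (1 - P) = 1 - P := by
    rw [Matrix.mul_sub, Matrix.sub_mul, Matrix.sub_mul, D.PP]; simp
  rwa [e] at this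

lemma Data.Q_pos (D : Data ρ A B P) {α : ℝ} (h0 : 0 < α) :
    0 < retr (Matrix.rpowH (B * ρ * B) α) := by
  have hX := D.X_psd
  rw [retr_rpowH hX.1]
  have hnn : ∀ i ∈ Finset.univ, 0 ≤ hX.1.eigenvalues i ^ α := fun i _ =>
    Real.rpow_nonneg (hX.eigenvalues_nonneg i) _
  refine lt_of_le_of_ne (Finset.sum_nonneg hnn) fun h => ?_
  rw [eq_comm, Finset.sum_eq_zero_iff_of_nonneg hnn] at h
  have h2 : hX.1.eigenvalues = 0 := by
    ext i
    have := h i (Finset.mem_univ i)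
    exact ((Real.rpow_eq_zero (hX.eigenvalues_nonneg i) h0.ne').1 this)
  rw [hX.1.eigenvalues_eq_zero_iff] at h2
  have h3 : ρ = A * (B * ρ * B) * A := by
    calc ρ = P * ρ * P := by rw [D.Pρ, D.ρP]
      _ = (A * B) * ρ * (B * A) := by rw [D.AB, D.BA]
      _ = _ := by simp only [Matrix.mul_assoc]
  rw [h2] at h3
  have := D.tr
  rw [h3] at this
  simp at this

lemma Data.trace_eq (D : Data ρ A B P) (T : Matrix ι ι ℂ) :
    retr (ρ * T) = retr ((B * ρ * B) * (A * T * A)) := by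
  unfold retr
  congr 1
  calc (ρ * T).trace = ((P * ρ * P) * T).trace := by rw [D.Pρ, D.ρP]
    _ = (A * (B * ρ * (B * A) * T)).trace := by
        rw [D.BA, ← D.AB]; simp only [Matrix.mul_assoc]
    _ = (B * ρ * (B * A) * T * A).trace := Matrix.trace_mul_comm _ _
    _ = _ := by simp only [Matrix.mul_assoc]

lemma Data.supp (D : Data ρ A B P) {T : Matrix ι ι ℂ} (hT : T.PosDef) (v : ι → ℂ)
    (hv : (A * T * A).mulVec v = 0) : (B * ρ * B).mulVec v = 0 := by
  have h1 : A.mulVec v = 0 := by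
    by_contra hne
    have := hT.dotProduct_mulVec_pos hne
    rw [Matrix.star_mulVec, D.hA, ← Matrix.dotProduct_mulVec, Matrix.mulVec_mulVec,
      Matrix.mulVec_mulVec, hv] at this
    simp at this
  have e : B * ρ * B = B * ρ * B * B * A := by
    rw [Matrix.mul_assoc _ B A, D.BA, Matrix.mul_assoc _ B P, D.BP]
  rw [e, ← Matrix.mulVec_mulVec, h1, Matrix.mulVec_zero]

lemma Data.holderT (D : Data ρ A B P) {T : Matrix ι ι ℂ} (hT : T.PosDef) {α : ℝ} (h0 : 0 < α)
    (h1 : α < 1) :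
    0 < retr (ρ * T) ∧ 0 < retr (Matrix.rpowH (A * T * A) (α / (α - 1))) ∧
    retr (Matrix.rpowH (B * ρ * B) α) ≤
      retr (ρ * T) ^ α * retr (Matrix.rpowH (A * T * A) (α / (α - 1))) ^ (1 - α) := by
  have hY := D.Y_psd hT.posSemidef
  have hh := holder D.X_psd hY (D.supp hT) h0 h1
  rw [← D.trace_eq] at hh
  have hQ := D.Q_pos h0
  have t0 : 0 ≤ retr (ρ * T) := trace_mul_nonneg D.hρ hT.posSemidef
  have r0 := retr_psd_nonneg (rpowH_psd hY (α / (α - 1)))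
  refine ⟨lt_of_le_of_ne t0 fun h => ?_, lt_of_le_of_ne r0 fun h => ?_, hh⟩
  · rw [← h, Real.zero_rpow h0.ne'] at hh
    linarith
  · rw [← h, Real.zero_rpow (by linarith : 1 - α ≠ 0)] at hh
    linarith

lemma Data.upper (D : Data ρ A B P) {T : Matrix ι ι ℂ} (hT : T.PosDef) {α : ℝ} (h0 : 0 < α)
    (h1 : α < 1) :
    α / (α - 1) * Real.log (retr (ρ * T)) -
      Real.log (retr (Matrix.rpowH (A * T * A) (α / (α - 1)))) ≤
    (α - 1)⁻¹ * Real.log (retr (Matrix.rpowH (B * ρ * B) α)) := by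
  obtain ⟨ht, hr, hh⟩ := D.holderT hT h0 h1
  have hl := Real.log_le_log (D.Q_pos h0) hh
  rw [Real.log_mul (Real.rpow_pos_of_pos ht _).ne' (Real.rpow_pos_of_pos hr _).ne',
    Real.log_rpow ht, Real.log_rpow hr] at hl
  have hneg : (α - 1)⁻¹ < 0 := inv_lt_zero.2 (by linarith)
  have := mul_le_mul_of_nonpos_left hl hneg.le
  refine le_trans (le_of_eq ?_) this
  have : α - 1 ≠ 0 := by linarith
  field_simp
  ring

lemma exists_scale {T : Matrix ι ι ℂ} (hT : T.PosDef) :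
    ∃ c : ℝ, 0 < c ∧ ((c : ℂ) • T).PosDef ∧ (1 - (c : ℂ) • T).PosSemidef := by
  have hp := hT.posSemidef
  have hn := hp.eigenvalues_nonneg
  have hS : 0 ≤ ∑ i, hT.1.eigenvalues i := Finset.sum_nonneg fun i _ => hn i
  have hS1 : 0 < 1 + ∑ i, hT.1.eigenvalues i := by linarith
  have hc : 0 < (1 + ∑ i, hT.1.eigenvalues i)⁻¹ := inv_pos.2 hS1
  refine ⟨(1 + ∑ i, hT.1.eigenvalues i)⁻¹, hc, hT.smul (by exact_mod_cast hc), ?_⟩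
  generalize hcc : (1 + ∑ i, hT.1.eigenvalues i)⁻¹ = c at *
  have e : 1 - (c : ℂ) • T = fc hT.1.eigenvectorUnitary (fun i => 1 + (-c) * hT.1.eigenvalues i) := by
    rw [← fc_add, fc_one, ← fc_smul, ← eq_fc hT.1]
    simp [sub_eq_add_neg]
  rw [e]
  apply fc_psd
  intro i
  have hi : hT.1.eigenvalues i ≤ ∑ i, hT.1.eigenvalues i :=
    Finset.single_le_sum (f := hT.1.eigenvalues) (fun j _ => hn j) (Finset.mem_univ i)
  have : c * (1 + ∑ i, hT.1.eigenvalues i) = 1 := by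
    rw [← hcc]; exact inv_mul_cancel₀ hS1.ne'
  nlinarith

lemma retr_add (M N : Matrix ι ι ℂ) : retr (M + N) = retr M + retr N := by
  simp [retr]

lemma retr_smul (c : ℝ) (M : Matrix ι ι ℂ) : retr ((c : ℂ) • M) = c * retr M := by
  simp [retr]

/-- `Tr (X + ε P)^α ≤ Tr (X + ε)^α`. -/
lemma Data.mono (D : Data ρ A B P) {α ε : ℝ} (h0 : 0 < α) (h1 : α < 1) (hε : 0 < ε) :
    retr (Matrix.rpowH (B * ρ * B + (ε : ℂ) • P) α) ≤
      ∑ i, (D.X_psd.1.eigenvalues i + ε) ^ α := by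
  have hX := D.X_psd
  have hεc : (0 : ℂ) < (ε : ℂ) := by exact_mod_cast hε
  have hZ : (B * ρ * B + (ε : ℂ) • P).PosSemidef := hX.add (D.P_psd.smul hεc.le)
  have hWd : (B * ρ * B + (ε : ℂ) • (1 : Matrix ι ι ℂ)).PosDef :=
    (Matrix.PosDef.one.smul hεc).posSemidef_add hX
  have hW := hWd.posSemidef
  have eW : B * ρ * B + (ε : ℂ) • (1 : Matrix ι ι ℂ) =
      fc hX.1.eigenvectorUnitary (fun i => hX.1.eigenvalues i + ε * 1) := by
    rw [← fc_add, ← fc_smul, fc_one, ← eq_fc hX.1]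
  have hR : retr (Matrix.rpowH (B * ρ * B + (ε : ℂ) • (1 : Matrix ι ι ℂ)) α) =
      ∑ i, (D.X_psd.1.eigenvalues i + ε) ^ α := by
    rw [eW, retr_rpowH_fc]; simp
  rw [← hR]
  have eWZ : B * ρ * B + (ε : ℂ) • (1 : Matrix ι ι ℂ) =
      (B * ρ * B + (ε : ℂ) • P) + (ε : ℂ) • (1 - P) := by
    rw [smul_sub]; abel
  have hPc := D.Pc_psd
  revert hZ hW hWd eWZ
  clear hR eW
  generalize B * ρ * B + (ε : ℂ) • (1 : Matrix ι ι ℂ) = W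
  generalize B * ρ * B + (ε : ℂ) • P = Z
  intro hZ hWd hW eWZ
  have hY := rpowH_psd hW (α - 1)
  have hWY : W * Matrix.rpowH W (α - 1) = Matrix.rpowH W α := by
    conv_lhs => rw [← rpowH_one hW]
    rw [rpowH_one hW]
    have := rpowH_mul hW (p := 1) (q := α - 1) one_ne_zero (by simpa using h0.ne')
    rw [rpowH_one hW] at this
    rw [this]
    congr 1; ring
  have hker : ∀ v : ι → ℂ, (Matrix.rpowH W (α - 1)).mulVec v = 0 → Z.mulVec v = 0 := by
    intro v hv
    have e : W = Matrix.rpowH W (2 - α) * Matrix.rpowH W (α - 1) := by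
      rw [rpowH_mul hW (by linarith) (by norm_num)]
      conv_lhs => rw [← rpowH_one hW]
      congr 1; ring
    have hWv : W.mulVec v = 0 := by
      rw [e, ← Matrix.mulVec_mulVec, hv, Matrix.mulVec_zero]
    have : v = 0 := by
      by_contra hne
      have := hWd.dotProduct_mulVec_pos hne
      rw [hWv] at this
      simp at this
    rw [this, Matrix.mulVec_zero]
  have hh := holder hZ hY hker h0 h1
  have e2 : retr (Matrix.rpowH (Matrix.rpowH W (α - 1)) (α / (α - 1))) =
      retr (Matrix.rpowH W α) := by
    have := retr_rpowH_smul_rpowH hW (c := 1) zero_le_one (α - 1) (α / (α - 1))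
    rw [Complex.ofReal_one, one_smul, Real.one_rpow, one_mul,
      mul_div_cancel₀ α (by linarith : α - 1 ≠ 0)] at this
    exact this
  have t0 := trace_mul_nonneg hZ hY
  have t1 : retr (Z * Matrix.rpowH W (α - 1)) ≤ retr (Matrix.rpowH W α) := by
    rw [← hWY]
    conv_rhs => rw [eWZ, Matrix.add_mul, retr_add, Matrix.smul_mul, retr_smul, ← eWZ]
    have := trace_mul_nonneg hPc hY
    have := mul_nonneg hε.le this
    linarith
  rw [e2] at hh
  have r0 := retr_psd_nonneg (rpowH_psd hW α)
  calc _ ≤ _ := hh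
    _ ≤ retr (Matrix.rpowH W α) ^ α * retr (Matrix.rpowH W α) ^ (1 - α) := by
      gcongr
    _ = retr (Matrix.rpowH W α) := by
      rw [rpow_add_ne r0 h0.ne' (by norm_num)]
      simp

lemma Data.lower (D : Data ρ A B P) {α ε : ℝ} (h0 : 0 < α) (h1 : α < 1) (hε : 0 < ε) :
    ∃ T : Matrix ι ι ℂ, T.PosDef ∧ (1 - T).PosSemidef ∧
      (α - 1)⁻¹ * Real.log (∑ i, (D.X_psd.1.eigenvalues i + ε) ^ α) ≤
      α / (α - 1) * Real.log (retr (ρ * T)) -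
      Real.log (retr (Matrix.rpowH (A * T * A) (α / (α - 1)))) := by
  have hX := D.X_psd
  have hεc : (0 : ℂ) < (ε : ℂ) := by exact_mod_cast hε
  have hne : α - 1 ≠ 0 := by linarith
  have hZ : (B * ρ * B + (ε : ℂ) • P).PosSemidef := hX.add (D.P_psd.smul hεc.le)
  have hmono := D.mono h0 h1 hε
  have hZP : (B * ρ * B + (ε : ℂ) • P) * (1 - P) = 0 := by
    rw [Matrix.mul_sub, Matrix.mul_one, Matrix.add_mul, Matrix.smul_mul, D.PP,
      Matrix.mul_assoc _ B P, D.BP, sub_self]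
  obtain ⟨Z, hZdef⟩ : ∃ Z, Z = B * ρ * B + (ε : ℂ) • P := ⟨_, rfl⟩
  rw [← hZdef] at hZ hmono hZP
  obtain ⟨Y, hYdef⟩ : ∃ Y, Y = Matrix.rpowH Z (α - 1) := ⟨_, rfl⟩
  have hY : Y.PosSemidef := hYdef ▸ rpowH_psd hZ _
  have hZY : Z * Y = Matrix.rpowH Z α := by
    have := rpowH_mul hZ (p := 1) (q := α - 1) one_ne_zero (by simpa using h0.ne')
    rw [rpowH_one hZ, ← hYdef] at this
    rw [this]
    congr 1; ring
  have hYZ : Y = Matrix.rpowH Z (α - 2) * Z := by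
    have := rpowH_mul hZ (p := α - 2) (q := 1) (by linarith) (by linarith)
    rw [rpowH_one hZ] at this
    rw [this, hYdef]
    congr 1; ring
  have hZY' : Z = Matrix.rpowH Z (2 - α) * Y := by
    rw [hYdef, rpowH_mul hZ (by linarith) (by norm_num)]
    conv_lhs => rw [← rpowH_one hZ]
    congr 1; ring
  have hYP : Y * P = Y := by
    have : Y * (1 - P) = 0 := by rw [hYZ, Matrix.mul_assoc, hZP, Matrix.mul_zero]
    rw [Matrix.mul_sub, Matrix.mul_one, sub_eq_zero] at this
    exact this.symm
  have hPY : P * Y = Y := by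
    have := congrArg Matrix.conjTranspose hYP
    rwa [Matrix.conjTranspose_mul, D.hP, hY.1] at this
  have hBYB : (B * Y * B).PosSemidef := by
    have := hY.mul_mul_conjTranspose_same B
    rwa [D.hB] at this
  have hT0 : (B * Y * B + (1 - P)).PosDef := by
    have hps := hBYB.add D.Pc_psd
    refine Matrix.PosDef.of_dotProduct_mulVec_pos hps.1 fun v hv => ?_
    refine lt_of_le_of_ne (hps.dotProduct_mulVec_nonneg v) fun h => hv ?_
    rw [Matrix.add_mulVec, dotProduct_add, eq_comm, add_eq_zero_iff_of_nonneg
      (hBYB.dotProduct_mulVec_nonneg v) (D.Pc_psd.dotProduct_mulVec_nonneg v)] at h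
    obtain ⟨ha, hb⟩ := h
    rw [D.Pc_psd.dotProduct_mulVec_zero_iff] at hb
    have ha' : Y.mulVec (B.mulVec v) = 0 := by
      rw [← hY.dotProduct_mulVec_zero_iff, Matrix.star_mulVec, D.hB, ← Matrix.dotProduct_mulVec,
        Matrix.mulVec_mulVec, Matrix.mulVec_mulVec]
      exact ha
    have hz : Z.mulVec (B.mulVec v) = 0 := by
      rw [hZY', ← Matrix.mulVec_mulVec, ha', Matrix.mulVec_zero]
    have hpz : P.mulVec (B.mulVec v) = 0 := by
      rw [← D.P_psd.dotProduct_mulVec_zero_iff]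
      rw [← hZ.dotProduct_mulVec_zero_iff, hZdef, Matrix.add_mulVec, dotProduct_add,
        add_eq_zero_iff_of_nonneg (hX.dotProduct_mulVec_nonneg _)
        ((D.P_psd.smul hεc.le).dotProduct_mulVec_nonneg _)] at hz
      have := hz.2
      rw [Matrix.smul_mulVec, dotProduct_smul, smul_eq_mul, mul_eq_zero] at this
      exact this.resolve_left hεc.ne'
    rw [Matrix.mulVec_mulVec, D.PB] at hpz
    rw [Matrix.sub_mulVec, Matrix.one_mulVec, ← D.AB, ← Matrix.mulVec_mulVec, hpz,
      Matrix.mulVec_zero, sub_zero] at hb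
    exact hb
  have hATA : A * (B * Y * B + (1 - P)) * A = Y := by
    have : A * (B * Y * B + (1 - P)) * A = (A * B) * Y * (B * A) + (A - A * P) * A := by
      simp only [Matrix.mul_add, Matrix.add_mul, Matrix.mul_sub, Matrix.mul_one,
        Matrix.mul_assoc]
    rw [this, D.AB, D.BA, hPY, hYP, D.AP, sub_self, Matrix.zero_mul, add_zero]
  obtain ⟨c, hc, hcd, hc1⟩ := exists_scale hT0
  refine ⟨_, hcd, hc1, ?_⟩
  have e1 : retr (ρ * ((c : ℂ) • (B * Y * B + (1 - P)))) =
      c * retr (ρ * (B * Y * B + (1 - P))) := by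
    rw [Matrix.mul_smul, retr_smul]
  have e2 : retr (Matrix.rpowH (A * ((c : ℂ) • (B * Y * B + (1 - P))) * A) (α / (α - 1))) =
      c ^ (α / (α - 1)) * retr (Matrix.rpowH Z α) := by
    rw [Matrix.mul_smul, Matrix.smul_mul, hATA, hYdef, retr_rpowH_smul_rpowH hZ hc.le,
      mul_div_cancel₀ α hne]
  obtain ⟨ht, hr, -⟩ := D.holderT hcd h0 h1
  rw [e1] at ht
  rw [e2] at hr
  have ht' : 0 < retr (ρ * (B * Y * B + (1 - P))) := pos_of_mul_pos_right ht hc.le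
  have hcp := Real.rpow_pos_of_pos hc (α / (α - 1))
  have hr' : 0 < retr (Matrix.rpowH Z α) := pos_of_mul_pos_right hr hcp.le
  have hle : retr (ρ * (B * Y * B + (1 - P))) ≤ retr (Matrix.rpowH Z α) := by
    rw [D.trace_eq, hATA, ← hZY, hZdef, Matrix.add_mul, retr_add, Matrix.smul_mul, retr_smul, hPY]
    have := mul_nonneg hε.le (retr_psd_nonneg hY)
    linarith
  rw [e1, e2, Real.log_mul hc.ne' ht'.ne', Real.log_mul hcp.ne' hr'.ne', Real.log_rpow hc]
  have l1 := Real.log_le_log ht' hle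
  have l2 := Real.log_le_log hr' hmono
  have hneg : (α - 1)⁻¹ < 0 := inv_lt_zero.2 (by linarith)
  have hneg' : α / (α - 1) ≤ 0 := by
    rw [div_eq_mul_inv]; exact mul_nonpos_of_nonneg_of_nonpos h0.le hneg.le
  have m1 := mul_le_mul_of_nonpos_left l1 hneg'
  have m2 := mul_le_mul_of_nonpos_left l2 hneg.le
  have e3 : (α - 1)⁻¹ = α / (α - 1) - 1 := by field_simp; ring
  have e4 : (α - 1)⁻¹ * Real.log (retr (Matrix.rpowH Z α)) =
      α / (α - 1) * Real.log (retr (Matrix.rpowH Z α)) - Real.log (retr (Matrix.rpowH Z α)) := by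
    rw [e3]; ring
  linarith

end core

end SRV

/-- variational expression for the sandwiched Rényi divergence, `α ∈ (0,1)`.
`D_α^*(ρ‖σ) = sup { (α/(α-1)) log Tr[ρT] - log Tr[(T^{1/2} σ^{(α-1)/α} T^{1/2})^{α/(α-1)}]
  : 0 < T ≤ 𝟙 }` (negative powers via functional calculus). -/
theorem sandwiched_renyi_variational_lt_one
    {ι : Type*} [Fintype ι] [DecidableEq ι]
    (ρ σ : Matrix ι ι ℂ)
    (hρ : ρ.PosSemidef) (hρtr : ρ.trace = 1)
    (hσ : σ.PosSemidef) (hσtr : σ.trace = 1)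
    (hsupp : ∀ v : ι → ℂ, σ.mulVec v = 0 → ρ.mulVec v = 0)
    (α : ℝ) (hα0 : 0 < α) (hα1 : α < 1) :
    sandwichedRenyiDiv α ρ σ =
      ⨆ (T : Matrix ι ι ℂ) (_ : T.PosDef ∧ (1 - T).PosSemidef),
        (α / (α - 1) * Real.log (retr (ρ * T))
          - Real.log (retr (Matrix.rpowH
              (Matrix.rpowH T (2⁻¹ : ℝ) * Matrix.rpowH σ ((α - 1) / α) *
                Matrix.rpowH T (2⁻¹ : ℝ)) (α / (α - 1))))) := by
  have hs : 0 < (1 - α) / (2 * α) := div_pos (by linarith) (by linarith)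
  have hne : α - 1 ≠ 0 := by linarith
  obtain ⟨P, D⟩ := SRV.exists_data hρ hρtr hσ hsupp hs
  have hAA : Matrix.rpowH σ ((α - 1) / α) =
      Matrix.rpowH σ (-((1 - α) / (2 * α))) * Matrix.rpowH σ (-((1 - α) / (2 * α))) := by
    rw [SRV.rpowH_mul hσ (neg_ne_zero.2 hs.ne') (by linarith)]
    congr 1
    field_simp
    ring
  have hone : retr (Matrix.rpowH (Matrix.rpowH σ ((α - 1) / α)) (α / (α - 1))) = 1 := by
    have := SRV.retr_rpowH_smul_rpowH hσ (c := 1) zero_le_one ((α - 1) / α) (α / (α - 1))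
    have e : (α - 1) / α * (α / (α - 1)) = 1 := by field_simp
    rw [Complex.ofReal_one, one_smul, Real.one_rpow, one_mul, e, SRV.rpowH_one hσ] at this
    rw [this]
    simp [retr, hσtr]
  unfold sandwichedRenyiDiv
  -- rewrite the objective in terms of `A T A`
  have hobj : ∀ T : Matrix ι ι ℂ, T.PosDef →
      retr (Matrix.rpowH (Matrix.rpowH T (2⁻¹ : ℝ) * Matrix.rpowH σ ((α - 1) / α) *
        Matrix.rpowH T (2⁻¹ : ℝ)) (α / (α - 1))) =
      retr (Matrix.rpowH (Matrix.rpowH σ (-((1 - α) / (2 * α))) * T *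
        Matrix.rpowH σ (-((1 - α) / (2 * α)))) (α / (α - 1))) := by
    intro T hT
    have hT' := hT.posSemidef
    have hTT : Matrix.rpowH T (2⁻¹ : ℝ) * Matrix.rpowH T (2⁻¹ : ℝ) = T := by
      rw [SRV.rpowH_mul hT' (by norm_num) (by norm_num)]
      conv_rhs => rw [← SRV.rpowH_one hT']
      congr 1; norm_num
    apply SRV.retr_rpowH_congr
    · have := (SRV.rpowH_psd hσ ((α - 1) / α)).mul_mul_conjTranspose_same
        (Matrix.rpowH T (2⁻¹ : ℝ))
      rw [SRV.rpowH_herm hT'] at this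
      exact this.1
    · exact (D.Y_psd hT').1
    · rw [hAA]
      conv_rhs => rw [← hTT]
      generalize Matrix.rpowH σ (-((1 - α) / (2 * α))) = A
      generalize Matrix.rpowH T (2⁻¹ : ℝ) = S
      have e1 : S * (A * A) * S = (S * A) * (A * S) := by simp only [Matrix.mul_assoc]
      have e2 : A * (S * S) * A = (A * S) * (S * A) := by simp only [Matrix.mul_assoc]
      rw [e1, e2, Matrix.charpoly_mul_comm]
  have hval : ∀ T : Matrix ι ι ℂ,
      (⨆ (_ : T.PosDef ∧ (1 - T).PosSemidef),
        (α / (α - 1) * Real.log (retr (ρ * T))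
          - Real.log (retr (Matrix.rpowH
              (Matrix.rpowH T (2⁻¹ : ℝ) * Matrix.rpowH σ ((α - 1) / α) *
                Matrix.rpowH T (2⁻¹ : ℝ)) (α / (α - 1)))))) ≤
      (α - 1)⁻¹ * Real.log (retr (Matrix.rpowH (Matrix.rpowH σ ((1 - α) / (2 * α)) * ρ *
        Matrix.rpowH σ ((1 - α) / (2 * α))) α)) := by
    intro T
    by_cases hT : T.PosDef ∧ (1 - T).PosSemidef
    · rw [ciSup_pos hT, hobj T hT.1]
      exact D.upper hT.1 hα0 hα1
    · haveI : IsEmpty (T.PosDef ∧ (1 - T).PosSemidef) := ⟨hT⟩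
      rw [Real.iSup_of_isEmpty]
      have := D.upper (T := 1) Matrix.PosDef.one hα0 hα1
      rw [Matrix.mul_one, Matrix.mul_one, ← hAA, hone] at this
      simpa [retr, hρtr] using this
  apply le_antisymm
  · have hcont : Filter.Tendsto (fun ε : ℝ => (α - 1)⁻¹ *
        Real.log (∑ i, (D.X_psd.1.eigenvalues i + ε) ^ α)) (nhdsWithin 0 (Set.Ioi 0))
        (nhds ((α - 1)⁻¹ * Real.log (∑ i, (D.X_psd.1.eigenvalues i + 0) ^ α))) := by
      refine Filter.Tendsto.mono_left ?_ nhdsWithin_le_nhds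
      have hc : Continuous (fun ε : ℝ => ∑ i, (D.X_psd.1.eigenvalues i + ε) ^ α) :=
        continuous_finsetSum _ fun i _ =>
          (continuous_const.add continuous_id).rpow_const fun _ => Or.inr hα0.le
      refine Filter.Tendsto.const_mul _ ((hc.tendsto 0).log ?_)
      have := (D.Q_pos hα0).ne'
      rw [SRV.retr_rpowH D.X_psd.1] at this
      simpa using this
    rw [SRV.retr_rpowH D.X_psd.1]
    simp only [add_zero] at hcont
    refine le_of_tendsto hcont ?_
    filter_upwards [self_mem_nhdsWithin] with ε hε
    obtain ⟨T, hT, hT1, hle⟩ := D.lower hα0 hα1 hε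
    refine hle.trans ?_
    refine le_trans (le_of_eq ?_) (le_ciSup ⟨_, Set.forall_mem_range.2 hval⟩ T)
    rw [ciSup_pos ⟨hT, hT1⟩, hobj T hT]
  · exact ciSup_le hval

end
end
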